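/- arXiv:1203.4301 — 3 statements merged into one kernel-verified Lean document; each statement's English description precedes it below -/
import Mathlib

section
/- Let Σ be a finitely primitive Markov shift over a countable alphabet I, G a countable group, Ψ: I* → G a semigroup homomorphism such that the group-extended Markov system σ⋊Ψ on Σ×G is irreducible, and φ: Σ → ℝ Hölder continuous and asymptotically symmetric with respect to Ψ. Then 2·P(φ, Ψ^{-1}(id) ∩ Σ*) ≥ P(2φ), where P(φ, C) denotes the pressure restricted to the collection C of admissible words and P(2φ) the full pressure of 2φ. -/
/-!
Up to bounded distortion, `e^{S_l (2φ)}` is the square of `e^{S_l φ}`. For `l` of length `n`, the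
asymptotic symmetry dominates one of the two factors, up to a subexponential constant, by the total
weight of the words `l'` of length `n + o(n)` with `Ψ l' = (Ψ l)⁻¹`. By irreducibility the finitely
many words that join any two letters can be replaced by words in the kernel of `Ψ`. Gluing `l` and
`l'` through one of them gives a word of length `2n + o(n)` in the kernel; its weight is, up to a
constant, the product of the two weights, and for a fixed joining word the gluing is injective
because `l` is the prefix of length `n`. Hence the partition function of `2φ` at `n` is at most a
subexponential factor times the sum of the restricted partition functions of `φ` at lengths
`2n + o(n)`, whose exponential growth rate in `n` is at most twice the restricted pressure.
-/

namespace Stmt13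

open scoped ENNReal

variable {I : Type*} (A : I → I → Prop)

/-- An admissible (infinite) sequence of the Markov shift. -/
def Adm (τ : ℕ → I) : Prop := ∀ n, A (τ n) (τ (n + 1))

/-- The cylinder set of a finite word inside the Markov shift. -/
def Cyl (l : List I) : Set (ℕ → I) :=
  {τ | Adm A τ ∧ ∀ i, (h : i < l.length) → τ i = l.get ⟨i, h⟩}

/-- Birkhoff (ergodic) sum `S_n f(τ)`. -/
def birk (f : (ℕ → I) → ℝ) (n : ℕ) (τ : ℕ → I) : ℝ :=
  ∑ i ∈ Finset.range n, f fun k => τ (k + i)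

/-- `S_ω f := sup_{τ ∈ [ω]} S_{|ω|} f(τ)`. -/
noncomputable def Sw (f : (ℕ → I) → ℝ) (l : List I) : ℝ :=
  sSup {y | ∃ τ ∈ Cyl A l, y = birk f l.length τ}

/-- The shift is finitely primitive. -/
def FinPrim : Prop :=
  ∃ m : ℕ, ∃ F : Set (List I), F.Finite ∧ (∀ w ∈ F, w.length = m) ∧
    ∀ i j : I, ∃ w ∈ F, (i :: (w ++ [j])).Chain' A

/-- Hölder continuity with respect to some metric `d_α`. -/
def Holder (f : (ℕ → I) → ℝ) : Prop :=
  ∃ α > (0 : ℝ), ∃ V : ℝ, ∀ n : ℕ, 1 ≤ n → ∀ τ τ' : ℕ → I, Adm A τ → Adm A τ' →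
    (∀ i < n, τ i = τ' i) → |f τ - f τ'| ≤ V * Real.exp (-α * n)

variable {G : Type*} [Group G] (ψ₀ : I → G)

/-- The semigroup homomorphism `Ψ : I* → G` induced by `ψ₀`. -/
def Ψ (l : List I) : G := (l.map ψ₀).prod

/-- Irreducibility of the group-extended Markov system `σ ⋊ Ψ`. -/
def IrrExt : Prop :=
  ∀ i j : I, ∀ g : G, ∃ w : List I, (i :: (w ++ [j])).Chain' A ∧ Ψ ψ₀ w = g

/-- Partition function over the words of length `n` in a collection `C`. -/
noncomputable def ZC (f : (ℕ → I) → ℝ) (C : List I → Prop) (n : ℕ) : ℝ≥0∞ :=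
  ∑' l : {l : List I // l.length = n ∧ l.Chain' A ∧ C l},
    ENNReal.ofReal (Real.exp (Sw A f l.val))

/-- The pressure of `f` restricted to the collection `C` of admissible words. -/
noncomputable def pressureC (f : (ℕ → I) → ℝ) (C : List I → Prop) : EReal :=
  Filter.atTop.limsup fun n : ℕ => (((n : ℝ)⁻¹ : ℝ) : EReal) * ENNReal.log (ZC A f C n)

/-- `φ` is asymptotically symmetric with respect to `Ψ`. -/
def AsympSymm (f : (ℕ → I) → ℝ) : Prop :=
  ∃ n₀ : ℕ, ∃ c : ℕ → ℝ, ∃ N : ℕ → ℕ, (∀ n, 0 < c n) ∧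
    Filter.Tendsto (fun n : ℕ => c n ^ ((n : ℝ)⁻¹)) Filter.atTop (nhds 1) ∧
    Filter.Tendsto (fun n : ℕ => (N n : ℝ) / n) Filter.atTop (nhds 0) ∧
    ∀ g : G, ∀ n : ℕ, n₀ ≤ n →
      (∑' l : {l : List I // l.length = n ∧ l.Chain' A ∧ Ψ ψ₀ l = g},
          ENNReal.ofReal (Real.exp (Sw A f l.val))) ≤
        ENNReal.ofReal (c n) *
          ∑' l : {l : List I // l.Chain' A ∧ Ψ ψ₀ l = g⁻¹ ∧
              n - N n ≤ l.length ∧ l.length ≤ n + N n},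
            ENNReal.ofReal (Real.exp (Sw A f l.val))

section Growth

open Filter Topology ExpGrowth

theorem pressureC_eq_expGrowthSup (f : (ℕ → I) → ℝ) (C : List I → Prop) :
    pressureC A f C = expGrowthSup (ZC A f C) :=
  limsup_congr <| .of_forall fun n => by
    rw [EReal.div_eq_inv_mul, EReal.coe_inv, EReal.coe_natCast]

theorem expGrowthSup_ofReal_exp {v : ℕ → ℝ} {r : ℝ}
    (hv : Tendsto (fun n : ℕ => v n / n) atTop (𝓝 r)) :
    expGrowthSup (fun n => ENNReal.ofReal (Real.exp (v n))) = r := by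
  refine Tendsto.limsup_eq <| (EReal.tendsto_coe.2 hv).congr fun n => ?_
  rw [ENNReal.log_ofReal_of_pos (Real.exp_pos _), Real.log_exp, EReal.coe_div, EReal.coe_natCast]

theorem expGrowthSup_ofReal_of_tendsto_rpow_inv {c : ℕ → ℝ} (hc : ∀ n, 0 < c n)
    (hlim : Tendsto (fun n : ℕ => c n ^ (n : ℝ)⁻¹) atTop (𝓝 1)) :
    expGrowthSup (fun n => ENNReal.ofReal (c n)) = 0 := by
  have hlog : Tendsto (fun n : ℕ => Real.log (c n) / n) atTop (𝓝 0) := by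
    have h := hlim.log one_ne_zero
    simp only [Real.log_rpow (hc _), Real.log_one, inv_mul_eq_div] at h
    exact h
  simpa only [Real.exp_log (hc _), EReal.coe_zero] using expGrowthSup_ofReal_exp hlog

theorem sum_Icc_le_exp {Z : ℕ → ℝ≥0∞} {a b : ℕ} {p : ℝ}
    (hZ : ∀ m, a ≤ m → Z m ≤ ENNReal.ofReal (Real.exp (p * m))) :
    ∑ m ∈ Finset.Icc a b, Z m ≤
      ENNReal.ofReal (Real.exp ((b - a : ℝ) + max (p * a) (p * b))) := by
  rcases lt_or_ge b a with hba | hab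
  · simp [Finset.Icc_eq_empty_of_lt hba]
  have hterm : ∀ m ∈ Finset.Icc a b,
      Z m ≤ ENNReal.ofReal (Real.exp (max (p * a) (p * b))) := by
    intro m hm
    obtain ⟨ham, hmb⟩ := Finset.mem_Icc.1 hm
    refine (hZ m ham).trans (ENNReal.ofReal_le_ofReal (Real.exp_le_exp.2 ?_))
    rcases le_total 0 p with hp | hp
    · exact le_max_of_le_right (by gcongr)
    · exact le_max_of_le_left (mul_le_mul_of_nonpos_left (by exact_mod_cast ham) hp)
  have hcard : ((Finset.Icc a b).card : ℝ≥0∞) ≤ ENNReal.ofReal (Real.exp (b - a)) := by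
    rw [← ENNReal.ofReal_natCast, Nat.card_Icc, Nat.cast_sub (by omega), Nat.cast_add_one,
      add_sub_right_comm]
    exact ENNReal.ofReal_le_ofReal (Real.add_one_le_exp _)
  calc ∑ m ∈ Finset.Icc a b, Z m
      ≤ (Finset.Icc a b).card * ENNReal.ofReal (Real.exp (max (p * a) (p * b))) := by
        simpa only [nsmul_eq_mul] using Finset.sum_le_card_nsmul _ _ _ hterm
    _ ≤ ENNReal.ofReal (Real.exp (b - a)) *
          ENNReal.ofReal (Real.exp (max (p * a) (p * b))) := by gcongr
    _ = _ := by rw [← ENNReal.ofReal_mul (Real.exp_pos _).le, ← Real.exp_add]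

theorem expGrowthSup_sum_Icc_le (Z : ℕ → ℝ≥0∞) {a b : ℕ → ℕ} {r : ℝ} (hr : 0 < r)
    (ha : Tendsto (fun n : ℕ => (a n : ℝ) / n) atTop (𝓝 r))
    (hb : Tendsto (fun n : ℕ => (b n : ℝ) / n) atTop (𝓝 r)) :
    expGrowthSup (fun n => ∑ m ∈ Finset.Icc (a n) (b n), Z m) ≤ r * expGrowthSup Z := by
  have hr' : (0 : EReal) < r := EReal.coe_pos.2 hr
  rw [← EReal.div_le_iff_le_mul hr' (EReal.coe_ne_top r), ← EReal.le_of_forall_lt_iff_le]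
  intro p hp
  rw [EReal.div_le_iff_le_mul hr' (EReal.coe_ne_top r)]
  have ha_top : Tendsto a atTop atTop := by
    refine tendsto_natCast_atTop_iff.1 <|
      (ha.pos_mul_atTop hr tendsto_natCast_atTop_atTop).congr' ?_
    filter_upwards [eventually_ne_atTop 0] with n hn
    exact div_mul_cancel₀ _ (Nat.cast_ne_zero.2 hn)
  have hZ : ∀ᶠ k in atTop, ∀ m, k ≤ m → Z m ≤ ENNReal.ofReal (Real.exp (p * m)) := by
    refine eventually_forall_ge_atTop.2 <| (eventually_le_exp hp).mono fun m hm => ?_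
    rwa [← EReal.coe_natCast, ← EReal.coe_mul, EReal.exp_coe] at hm
  have hexponent : Tendsto
      (fun n : ℕ => ((b n - a n : ℝ) + max (p * a n) (p * b n)) / n) atTop (𝓝 (r * p)) := by
    have h := (hb.sub ha).add ((ha.const_mul p).max (hb.const_mul p))
    rw [sub_self, zero_add, max_self, mul_comm] at h
    refine h.congr fun n => ?_
    rw [add_div, sub_div, ← max_div_div_right n.cast_nonneg, mul_div_assoc, mul_div_assoc]
  calc expGrowthSup (fun n => ∑ m ∈ Finset.Icc (a n) (b n), Z m)
      ≤ expGrowthSup (fun n => ENNReal.ofReal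
          (Real.exp ((b n - a n : ℝ) + max (p * a n) (p * b n)))) :=
        expGrowthSup_eventually_monotone <| (ha_top.eventually hZ).mono fun _ => sum_Icc_le_exp
    _ = r * p := by rw [expGrowthSup_ofReal_exp hexponent, EReal.coe_mul]

end Growth

section Cylinders

variable {A}

theorem exists_adm (hA : ∀ i, ∃ j, A i j) (i : I) : ∃ τ, Adm A τ ∧ τ 0 = i := by
  choose next hnext using hA
  refine ⟨fun k => next^[k] i, fun n => ?_, rfl⟩
  simp only [Function.iterate_succ_apply']
  exact hnext _

theorem cons_mem_cyl {a : I} {l : List I} {τ : ℕ → I} (hτ : τ ∈ Cyl A l) (ha : A a (τ 0)) :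
    (fun k => Nat.casesOn k a τ : ℕ → I) ∈ Cyl A (a :: l) := by
  refine ⟨fun n => ?_, fun i hi => ?_⟩
  · cases n with
    | zero => exact ha
    | succ n => exact hτ.1 n
  · cases i with
    | zero => rfl
    | succ i => exact hτ.2 i (Nat.lt_of_succ_lt_succ hi)

theorem cyl_nonempty (hA : ∀ i, ∃ j, A i j) {l : List I} (hl : l ≠ []) (hc : l.IsChain A) :
    (Cyl A l).Nonempty := by
  induction l with
  | nil => exact absurd rfl hl
  | cons a l ih =>
    cases l with
    | nil =>
      obtain ⟨τ, hτ, hτa⟩ := exists_adm hA a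
      exact ⟨τ, hτ, fun i hi => by obtain rfl := Nat.lt_one_iff.1 hi; exact hτa⟩
    | cons b l =>
      obtain ⟨hab, hbl⟩ := List.isChain_cons_cons.1 hc
      obtain ⟨τ, hτ⟩ := ih (List.cons_ne_nil b l) hbl
      have hτb : τ 0 = b := hτ.2 0 (Nat.succ_pos _)
      exact ⟨_, cons_mem_cyl hτ (hτb ▸ hab)⟩

theorem adm_shift {τ : ℕ → I} (hτ : Adm A τ) (k : ℕ) : Adm A fun n => τ (n + k) := fun n => by
  simpa only [add_right_comm] using hτ (n + k)

theorem mem_cyl_of_append {l l' : List I} {τ : ℕ → I} (hτ : τ ∈ Cyl A (l ++ l')) :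
    τ ∈ Cyl A l := by
  refine ⟨hτ.1, fun i hi => ?_⟩
  rw [hτ.2 i (by simp only [List.length_append]; omega)]
  exact List.getElem_append_left hi

theorem shift_mem_cyl_of_append {l l' : List I} {τ : ℕ → I} (hτ : τ ∈ Cyl A (l ++ l')) :
    (fun k => τ (k + l.length)) ∈ Cyl A l' := by
  refine ⟨adm_shift hτ.1 _, fun i hi => ?_⟩
  simp only [hτ.2 (i + l.length) (by simp only [List.length_append]; omega), List.get_eq_getElem,
    List.getElem_append_right (Nat.le_add_left _ _), Nat.add_sub_cancel]

end Cylinders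

section Distortion

variable {A}

/-- `D` bounds the distortion of `f`: the Birkhoff sums `S_{|l|} f` oscillate by at most `D` on
each cylinder `[l]`. -/
def DistortionLE (A : I → I → Prop) (f : (ℕ → I) → ℝ) (D : ℝ) : Prop :=
  ∀ l, ∀ τ ∈ Cyl A l, ∀ τ' ∈ Cyl A l, birk f l.length τ ≤ birk f l.length τ' + D

variable {f : (ℕ → I) → ℝ} {D : ℝ}

theorem Holder.exists_geometric_bound (hf : Holder A f) :
    ∃ V r : ℝ, 0 ≤ V ∧ 0 ≤ r ∧ r < 1 ∧ ∀ n τ τ', Adm A τ → Adm A τ' →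
      (∀ i ≤ n, τ i = τ' i) → |f τ - f τ'| ≤ V * r ^ n := by
  obtain ⟨α, hα, V, hV⟩ := hf
  refine ⟨|V| * Real.exp (-α), Real.exp (-α), by positivity, (Real.exp_pos _).le,
    by simpa using hα, fun n τ τ' hτ hτ' h => ?_⟩
  calc |f τ - f τ'| ≤ V * Real.exp (-α * (n + 1 : ℕ)) :=
        hV (n + 1) (Nat.le_add_left 1 n) τ τ' hτ hτ' fun i hi => h i (Nat.le_of_lt_succ hi)
    _ ≤ |V| * Real.exp (-α * (n + 1 : ℕ)) := by gcongr; exact le_abs_self V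
    _ = |V| * Real.exp (-α) * Real.exp (-α) ^ n := by
        rw [mul_comm (-α), Real.exp_nat_mul, pow_succ']; ring

theorem Holder.exists_distortionLE (hf : Holder A f) : ∃ D, DistortionLE A f D := by
  obtain ⟨V, r, hV, hr0, hr1, hbound⟩ := hf.exists_geometric_bound
  refine ⟨V * ∑' k : ℕ, r ^ k, fun l τ hτ τ' hτ' => ?_⟩
  have hterm : ∀ i ∈ Finset.range l.length,
      f (fun k => τ (k + i)) - f (fun k => τ' (k + i)) ≤ V * r ^ (l.length - 1 - i) := by
    intro i hi
    have hil := Finset.mem_range.1 hi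
    refine (le_abs_self _).trans <| hbound _ _ _ (adm_shift hτ.1 i) (adm_shift hτ'.1 i) ?_
    intro k hk
    exact (hτ.2 (k + i) (by omega)).trans (hτ'.2 (k + i) (by omega)).symm
  have hsum : birk f l.length τ - birk f l.length τ' ≤ V * ∑ k ∈ Finset.range l.length, r ^ k := by
    rw [birk, birk, ← Finset.sum_sub_distrib, ← Finset.sum_range_reflect (r ^ ·), Finset.mul_sum]
    exact Finset.sum_le_sum hterm
  have hgeom : V * ∑ k ∈ Finset.range l.length, r ^ k ≤ V * ∑' k : ℕ, r ^ k := by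
    gcongr
    exact (summable_geometric_of_lt_one hr0 hr1).sum_le_tsum _ fun _ _ => pow_nonneg hr0 _
  linarith

theorem birk_le_Sw (hf : DistortionLE A f D) {l : List I} {τ : ℕ → I} (hτ : τ ∈ Cyl A l) :
    birk f l.length τ ≤ Sw A f l := by
  refine le_csSup ⟨birk f l.length τ + D, ?_⟩ ⟨τ, hτ, rfl⟩
  rintro _ ⟨τ', hτ', rfl⟩
  exact hf l τ' hτ' τ hτ

theorem Sw_le_birk_add (hf : DistortionLE A f D) {l : List I} {τ : ℕ → I} (hτ : τ ∈ Cyl A l) :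
    Sw A f l ≤ birk f l.length τ + D := by
  refine csSup_le ⟨_, τ, hτ, rfl⟩ ?_
  rintro _ ⟨τ', hτ', rfl⟩
  exact hf l τ' hτ' τ hτ

theorem Sw_two_mul_le (hf : DistortionLE A f D) {l : List I} (hl : (Cyl A l).Nonempty) :
    Sw A (fun τ => 2 * f τ) l ≤ 2 * Sw A f l := by
  obtain ⟨τ, hτ⟩ := hl
  refine csSup_le ⟨_, τ, hτ, rfl⟩ ?_
  rintro _ ⟨τ', hτ', rfl⟩
  rw [birk, ← Finset.mul_sum]
  exact mul_le_mul_of_nonneg_left (birk_le_Sw hf hτ') zero_le_two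

theorem birk_add (f : (ℕ → I) → ℝ) (a b : ℕ) (τ : ℕ → I) :
    birk f (a + b) τ = birk f a τ + birk f b fun k => τ (k + a) := by
  rw [birk, Finset.sum_range_add]
  simp only [birk, add_assoc, add_comm a]

theorem Sw_add_Sw_le (hf : DistortionLE A f D) {l l' : List I} (hl : (Cyl A (l ++ l')).Nonempty) :
    Sw A f l + Sw A f l' ≤ Sw A f (l ++ l') + 2 * D := by
  obtain ⟨τ, hτ⟩ := hl
  have hsplit := birk_le_Sw hf hτ
  rw [List.length_append, birk_add] at hsplit
  have hleft := Sw_le_birk_add hf (mem_cyl_of_append hτ)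
  have hright := Sw_le_birk_add hf (shift_mem_cyl_of_append hτ)
  linarith

end Distortion

section Connectors

variable {A}

/-- Any two letters of the alphabet can be joined by a word of the finite family `U`. The words of
`U` may be empty and need not have a common length. -/
def Connects (A : I → I → Prop) (U : Finset (List I)) : Prop :=
  ∀ i j, ∃ u ∈ U, (i :: (u ++ [j])).IsChain A

variable {U : Finset (List I)}

theorem FinPrim.exists_connects (hA : FinPrim A) : ∃ U, Connects A U := by
  obtain ⟨_, F, hF, -, hconn⟩ := hA
  exact ⟨hF.toFinset, fun i j =>
    let ⟨w, hw, hchain⟩ := hconn i j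
    ⟨w, hF.mem_toFinset.2 hw, hchain⟩⟩

theorem Connects.exists_finset_succ (hU : Connects A U) : ∃ S : Finset I, ∀ i, ∃ a ∈ S, A i a := by
  classical
  rcases isEmpty_or_nonempty I with hI | ⟨⟨o⟩⟩
  · exact ⟨∅, hI.elim⟩
  refine ⟨U.image (·.headD o), fun i => ?_⟩
  obtain ⟨u, hu, hchain⟩ := hU i o
  refine ⟨_, Finset.mem_image_of_mem _ hu, ?_⟩
  cases u with
  | nil => exact List.isChain_pair.1 hchain
  | cons a u => exact (List.isChain_cons_cons.1 hchain).1

theorem Connects.exists_finset_pred (hU : Connects A U) : ∃ S : Finset I, ∀ j, ∃ b ∈ S, A b j := by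
  classical
  rcases isEmpty_or_nonempty I with hI | ⟨⟨o⟩⟩
  · exact ⟨∅, hI.elim⟩
  refine ⟨U.image (·.getLastD o), fun j => ?_⟩
  obtain ⟨u, hu, hchain⟩ := hU o j
  refine ⟨_, Finset.mem_image_of_mem _ hu, ?_⟩
  rcases List.eq_nil_or_concat' u with rfl | ⟨u, b, rfl⟩
  · exact List.isChain_pair.1 hchain
  · rw [List.append_assoc, List.singleton_append, List.isChain_cons_append_cons_cons] at hchain
    simpa only [List.getLastD_concat] using hchain.2.1

theorem Connects.exists_succ (hU : Connects A U) (i : I) : ∃ j, A i j :=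
  let ⟨_, hS⟩ := hU.exists_finset_succ
  let ⟨a, _, ha⟩ := hS i
  ⟨a, ha⟩

variable {ψ₀}

theorem Ψ_append (l l' : List I) : Ψ ψ₀ (l ++ l') = Ψ ψ₀ l * Ψ ψ₀ l' := by
  rw [Ψ, List.map_append, List.prod_append, Ψ, Ψ]

theorem Connects.exists_connects_ker (hU : Connects A U) (hirr : IrrExt A ψ₀) :
    ∃ U', Connects A U' ∧ ∀ u ∈ U', Ψ ψ₀ u = 1 := by
  classical
  obtain ⟨S, hS⟩ := hU.exists_finset_succ
  obtain ⟨P, hP⟩ := hU.exists_finset_pred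
  choose v hv hvΨ using fun a b => hirr a b ((ψ₀ a)⁻¹ * (ψ₀ b)⁻¹)
  refine ⟨Finset.image₂ (fun a b => a :: (v a b ++ [b])) S P, fun i j => ?_, ?_⟩
  · obtain ⟨a, ha, hia⟩ := hS i
    obtain ⟨b, hb, hbj⟩ := hP j
    refine ⟨_, Finset.mem_image₂_of_mem ha hb, ?_⟩
    have hab : (a :: (v a b ++ [b])).IsChain A := hv a b
    simpa [List.append_assoc] using ⟨hia, hab, hbj⟩
  · simp only [Finset.mem_image₂]
    rintro _ ⟨a, -, b, -, rfl⟩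
    have hvab := hvΨ a b
    rw [Ψ] at hvab ⊢
    simp [hvab]

theorem Connects.exists_isChain_append (hU : Connects A U) {l l' : List I} (hl : l ≠ [])
    (hl' : l' ≠ []) (hc : l.IsChain A) (hc' : l'.IsChain A) :
    ∃ u ∈ U, (l ++ (u ++ l')).IsChain A := by
  obtain ⟨l, a, rfl⟩ := (List.eq_nil_or_concat' l).resolve_left hl
  obtain ⟨b, l', rfl⟩ := List.exists_cons_of_ne_nil hl'
  obtain ⟨u, hu, hchain⟩ := hU a b
  refine ⟨u, hu, ?_⟩
  rw [List.append_assoc, List.singleton_append, List.isChain_split, List.isChain_cons_split]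
  exact ⟨hc, hchain, hc'⟩

end Connectors

section Gluing

variable {A} {f : (ℕ → I) → ℝ} {D : ℝ} {U : Finset (List I)}

/-- The weight `e^{S_l f}` of a word in the partition functions. -/
noncomputable def weight (A : I → I → Prop) (f : (ℕ → I) → ℝ) (l : List I) : ℝ≥0∞ :=
  ENNReal.ofReal (Real.exp (Sw A f l))

/-- The factor lost when a product of two weights is replaced by the weight of the two words glued
together through a word of `U`. -/
noncomputable def gluingConst (A : I → I → Prop) (f : (ℕ → I) → ℝ) (D : ℝ)
    (U : Finset (List I)) : ℝ≥0∞ :=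
  ∑ u ∈ U, ENNReal.ofReal (Real.exp (4 * D - Sw A f u))

theorem gluingConst_ne_top : gluingConst A f D U ≠ ∞ :=
  ENNReal.sum_ne_top.2 fun _ _ => ENNReal.ofReal_ne_top

theorem weight_two_mul_le (hf : DistortionLE A f D) {l : List I} (hl : (Cyl A l).Nonempty) :
    weight A (fun τ => 2 * f τ) l ≤ weight A f l * weight A f l := by
  rw [weight, weight, ← ENNReal.ofReal_mul (Real.exp_pos _).le, ← Real.exp_add, ← two_mul]
  exact ENNReal.ofReal_le_ofReal (Real.exp_le_exp.2 (Sw_two_mul_le hf hl))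

theorem weight_mul_weight_le (hf : DistortionLE A f D) {l u l' : List I}
    (hl : (Cyl A (l ++ (u ++ l'))).Nonempty) :
    weight A f l * weight A f l' ≤
      ENNReal.ofReal (Real.exp (4 * D - Sw A f u)) * weight A f (l ++ (u ++ l')) := by
  have houter := Sw_add_Sw_le hf hl
  have hinner := Sw_add_Sw_le hf (hl.elim fun _ hτ => ⟨_, shift_mem_cyl_of_append hτ⟩)
  rw [weight, weight, weight, ← ENNReal.ofReal_mul (Real.exp_pos _).le,
    ← ENNReal.ofReal_mul (Real.exp_pos _).le, ← Real.exp_add, ← Real.exp_add]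
  exact ENNReal.ofReal_le_ofReal (Real.exp_le_exp.2 (by linarith))

variable {ι : Type*} {C : List I → Prop} {s : Finset ℕ}

theorem tsum_weight_le_sum_ZC {v : ι → List I} (hinj : Function.Injective v)
    (hlen : ∀ i, (v i).length ∈ s) (hadm : ∀ i, (v i).IsChain A) (hC : ∀ i, C (v i)) :
    ∑' i, weight A f (v i) ≤ ∑ m ∈ s, ZC A f C m := by
  let Words := Σ m : s, {l : List I // l.length = m ∧ l.IsChain A ∧ C l}
  let toWords : ι → Words := fun i => ⟨⟨_, hlen i⟩, v i, rfl, hadm i, hC i⟩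
  have hinj' : Function.Injective toWords := fun i j h =>
    hinj (congrArg (fun w : Words => w.2.1) h)
  calc ∑' i, weight A f (v i) ≤ ∑' w : Words, weight A f w.2.1 :=
        ENNReal.tsum_comp_le_tsum_of_injective hinj' fun w : Words => weight A f w.2.1
    _ = ∑ m : s, ZC A f C m := by rw [ENNReal.tsum_sigma', tsum_fintype]; rfl
    _ = ∑ m ∈ s, ZC A f C m := Finset.sum_coe_sort s (ZC A f C)

variable {n : ℕ} {x y : ι → List I}

theorem tsum_weight_mul_weight_le_of_connector (hf : DistortionLE A f D)
    (hA : ∀ i, ∃ j, A i j) (hn : n ≠ 0) (hxy : Function.Injective fun i => (x i, y i))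
    (hx : ∀ i, (x i).length = n) (u : List I) (hadm : ∀ i, (x i ++ (u ++ y i)).IsChain A)
    (hlen : ∀ i, (x i ++ (u ++ y i)).length ∈ s) (hC : ∀ i, C (x i ++ (u ++ y i))) :
    ∑' i, weight A f (x i) * weight A f (y i) ≤
      ENNReal.ofReal (Real.exp (4 * D - Sw A f u)) * ∑ m ∈ s, ZC A f C m := by
  have hcyl : ∀ i, (Cyl A (x i ++ (u ++ y i))).Nonempty := fun i =>
    cyl_nonempty hA
      (List.append_ne_nil_of_left_ne_nil (List.ne_nil_of_length_pos (by have := hx i; omega)) _)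
      (hadm i)
  have hinj : Function.Injective fun i => x i ++ (u ++ y i) := fun i j h => by
    obtain ⟨hxeq, huy⟩ := List.append_inj h ((hx i).trans (hx j).symm)
    exact hxy (Prod.ext hxeq (List.append_cancel_left huy))
  calc ∑' i, weight A f (x i) * weight A f (y i)
      ≤ ∑' i, ENNReal.ofReal (Real.exp (4 * D - Sw A f u)) * weight A f (x i ++ (u ++ y i)) :=
        ENNReal.tsum_le_tsum fun i => weight_mul_weight_le hf (hcyl i)
    _ = ENNReal.ofReal (Real.exp (4 * D - Sw A f u)) * ∑' i, weight A f (x i ++ (u ++ y i)) :=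
        ENNReal.tsum_mul_left
    _ ≤ _ := by gcongr; exact tsum_weight_le_sum_ZC hinj hlen hadm hC

theorem tsum_weight_mul_weight_le (hf : DistortionLE A f D) (hU : Connects A U) (hn : n ≠ 0)
    (hxy : Function.Injective fun i => (x i, y i)) (hx : ∀ i, (x i).length = n)
    (hy : ∀ i, y i ≠ []) (hxadm : ∀ i, (x i).IsChain A) (hyadm : ∀ i, (y i).IsChain A)
    (hlen : ∀ i, ∀ u ∈ U, (x i ++ (u ++ y i)).length ∈ s)
    (hC : ∀ i, ∀ u ∈ U, C (x i ++ (u ++ y i))) :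
    ∑' i, weight A f (x i) * weight A f (y i) ≤ gluingConst A f D U * ∑ m ∈ s, ZC A f C m := by
  choose u hu hadm using fun i => hU.exists_isChain_append
    (List.ne_nil_of_length_pos (by have := hx i; omega)) (hy i) (hxadm i) (hyadm i)
  let conn : ι → U := fun i => ⟨u i, hu i⟩
  have hfiber : ∀ u' : U, ∑' i : conn ⁻¹' {u'}, weight A f (x i) * weight A f (y i) ≤
      ENNReal.ofReal (Real.exp (4 * D - Sw A f u')) * ∑ m ∈ s, ZC A f C m := fun u' =>
    tsum_weight_mul_weight_le_of_connector hf hU.exists_succ hn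
      (hxy.comp Subtype.val_injective) (fun i => hx i) u'
      (fun ⟨i, hi⟩ => congrArg Subtype.val hi ▸ hadm i)
      (fun i => hlen i u' u'.2) (fun i => hC i u' u'.2)
  calc ∑' i, weight A f (x i) * weight A f (y i)
      = ∑' u' : U, ∑' i : conn ⁻¹' {u'}, weight A f (x i) * weight A f (y i) :=
        (ENNReal.tsum_fiberwise _ conn).symm
    _ ≤ ∑' u' : U, ENNReal.ofReal (Real.exp (4 * D - Sw A f u')) * ∑ m ∈ s, ZC A f C m :=
        ENNReal.tsum_le_tsum hfiber
    _ = gluingConst A f D U * ∑ m ∈ s, ZC A f C m := by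
        rw [tsum_fintype, ← Finset.sum_mul, gluingConst,
          Finset.sum_coe_sort U fun u' => ENNReal.ofReal (Real.exp (4 * D - Sw A f u'))]

end Gluing

section Symmetry

open Filter Topology ExpGrowth

variable {A} {ψ₀} {f : (ℕ → I) → ℝ} {D : ℝ} {U : Finset (List I)} {n a b : ℕ} {c : ℝ≥0∞}

/-- The inequality of asymptotic symmetry for the words of one length `n`, with constant `c` and
with the lengths on the right-hand side ranging over `[a, b]`. -/
def SymmBound (A : I → I → Prop) (ψ₀ : I → G) (f : (ℕ → I) → ℝ) (n a b : ℕ) (c : ℝ≥0∞) : Prop :=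
  ∀ g : G, ∑' l : {l : List I // l.length = n ∧ l.IsChain A ∧ Ψ ψ₀ l = g}, weight A f l ≤
    c * ∑' l : {l : List I // l.IsChain A ∧ Ψ ψ₀ l = g⁻¹ ∧ a ≤ l.length ∧ l.length ≤ b},
      weight A f l

/-- Pairs of admissible words with mutually inverse images under `Ψ`, the first of length `n` and
the second of length in `[a, b]`. The conjunct `True` makes the first index type that
of `ZC` over all admissible words. -/
abbrev InversePair (A : I → I → Prop) (ψ₀ : I → G) (n a b : ℕ) : Type _ :=
  Σ l : {l : List I // l.length = n ∧ l.IsChain A ∧ True},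
    {l' : List I // l'.IsChain A ∧ Ψ ψ₀ l' = (Ψ ψ₀ l.1)⁻¹ ∧ a ≤ l'.length ∧ l'.length ≤ b}

theorem SymmBound.weight_le (hsym : SymmBound A ψ₀ f n a b c) {l : List I} (hl : l.length = n)
    (hadm : l.IsChain A) :
    weight A f l ≤ c * ∑' l' : {l' : List I // l'.IsChain A ∧ Ψ ψ₀ l' = (Ψ ψ₀ l)⁻¹ ∧
      a ≤ l'.length ∧ l'.length ≤ b}, weight A f l' :=
  let Fiber := {l' : List I // l'.length = n ∧ l'.IsChain A ∧ Ψ ψ₀ l' = Ψ ψ₀ l}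
  (ENNReal.le_tsum (f := fun l' : Fiber => weight A f l') ⟨l, hl, hadm, rfl⟩).trans
    (hsym (Ψ ψ₀ l))

theorem ZC_two_mul_le_tsum (hf : DistortionLE A f D) (hA : ∀ i, ∃ j, A i j) (hn : n ≠ 0)
    (hsym : SymmBound A ψ₀ f n a b c) :
    ZC A (fun τ => 2 * f τ) (fun _ => True) n ≤
      c * ∑' p : InversePair A ψ₀ n a b, weight A f p.1 * weight A f p.2 := by
  rw [ENNReal.tsum_sigma', ← ENNReal.tsum_mul_left]
  refine ENNReal.tsum_le_tsum fun l => ?_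
  have hcyl : (Cyl A l.1).Nonempty :=
    cyl_nonempty hA (List.ne_nil_of_length_pos (l.2.1.symm ▸ Nat.pos_of_ne_zero hn)) l.2.2.1
  refine (weight_two_mul_le hf hcyl).trans ?_
  dsimp only
  rw [ENNReal.tsum_mul_left, mul_left_comm]
  gcongr
  exact hsym.weight_le l.2.1 l.2.2.1

theorem tsum_inversePair_le (hf : DistortionLE A f D) (hU : Connects A U)
    (hΨ : ∀ u ∈ U, Ψ ψ₀ u = 1) (hn : n ≠ 0) (ha : a ≠ 0) :
    ∑' p : InversePair A ψ₀ n a b, weight A f p.1 * weight A f p.2 ≤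
      gluingConst A f D U *
        ∑ m ∈ Finset.Icc (n + a) (n + b + U.sup List.length), ZC A f (fun l => Ψ ψ₀ l = 1) m := by
  refine tsum_weight_mul_weight_le hf hU hn ?_ (fun p => p.1.2.1) ?_ (fun p => p.1.2.2.1)
    (fun p => p.2.2.1) ?_ ?_
  · rintro ⟨⟨l, _⟩, ⟨l', _⟩⟩ ⟨⟨k, _⟩, ⟨k', _⟩⟩ h
    obtain ⟨rfl, rfl⟩ := Prod.mk.inj h
    rfl
  · rintro ⟨_, l', -, -, hal', -⟩
    exact List.ne_nil_of_length_pos ((Nat.pos_of_ne_zero ha).trans_le hal')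
  · rintro ⟨⟨l, hl, -⟩, l', -, -, hal', hl'b⟩ u hu
    have huU : u.length ≤ U.sup List.length := Finset.le_sup hu
    simp only [List.length_append, Finset.mem_Icc]
    omega
  · rintro ⟨l, l', -, hl', -⟩ u hu
    rw [Ψ_append, Ψ_append, hΨ u hu, one_mul]
    exact mul_eq_one_iff_inv_eq.2 hl'.symm

theorem ZC_two_mul_le (hf : DistortionLE A f D) (hU : Connects A U)
    (hΨ : ∀ u ∈ U, Ψ ψ₀ u = 1) (hn : n ≠ 0) (ha : a ≠ 0) (hsym : SymmBound A ψ₀ f n a b c) :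
    ZC A (fun τ => 2 * f τ) (fun _ => True) n ≤
      gluingConst A f D U * (c *
        ∑ m ∈ Finset.Icc (n + a) (n + b + U.sup List.length), ZC A f (fun l => Ψ ψ₀ l = 1) m) :=
  calc ZC A (fun τ => 2 * f τ) (fun _ => True) n
      ≤ c * ∑' p : InversePair A ψ₀ n a b, weight A f p.1 * weight A f p.2 :=
        ZC_two_mul_le_tsum hf hU.exists_succ hn hsym
    _ ≤ c * _ := by gcongr; exact tsum_inversePair_le hf hU hΨ hn ha
    _ = _ := mul_left_comm ..

variable {N : ℕ → ℕ}

theorem eventually_lt_of_tendsto_div_zero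
    (hN : Tendsto (fun n : ℕ => (N n : ℝ) / n) atTop (𝓝 0)) : ∀ᶠ n in atTop, N n < n := by
  filter_upwards [hN.eventually_lt_const one_pos, eventually_gt_atTop 0] with n hNn hn
  rwa [div_lt_one (Nat.cast_pos.2 hn), Nat.cast_lt] at hNn

theorem tendsto_add_sub_div (hN : Tendsto (fun n : ℕ => (N n : ℝ) / n) atTop (𝓝 0)) :
    Tendsto (fun n : ℕ => ((n + (n - N n) : ℕ) : ℝ) / n) atTop (𝓝 2) := by
  have h := hN.const_sub 2
  rw [sub_zero] at h
  refine h.congr' ?_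
  filter_upwards [eventually_lt_of_tendsto_div_zero hN, eventually_gt_atTop 0] with n hNn hn
  rw [Nat.cast_add, Nat.cast_sub hNn.le]
  field

theorem tendsto_add_add_div (hN : Tendsto (fun n : ℕ => (N n : ℝ) / n) atTop (𝓝 0)) (L : ℕ) :
    Tendsto (fun n : ℕ => ((n + (n + N n) + L : ℕ) : ℝ) / n) atTop (𝓝 2) := by
  have h := (hN.const_add 2).add (tendsto_const_div_atTop_nhds_zero_nat (L : ℝ))
  rw [add_zero, add_zero] at h
  refine h.congr' ?_
  filter_upwards [eventually_gt_atTop 0] with n hn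
  push_cast
  field

theorem stmt13_general
    (hU : ∃ U : Finset (List I), Connects A U ∧ ∀ u ∈ U, Ψ ψ₀ u = 1)
    (hf : ∃ D, DistortionLE A f D) (hsym : AsympSymm A ψ₀ f) :
    pressureC A (fun τ => 2 * f τ) (fun _ => True) ≤
      (2 : EReal) * pressureC A f (fun l => Ψ ψ₀ l = 1) := by
  obtain ⟨U, hU, hΨ⟩ := hU
  obtain ⟨D, hf⟩ := hf
  obtain ⟨n₀, c, N, hc, hclim, hN, hsymm⟩ := hsym
  let S : ℕ → ℝ≥0∞ := fun n => ∑ m ∈ Finset.Icc (n + (n - N n))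
    (n + (n + N n) + U.sup List.length), ZC A f (fun l => Ψ ψ₀ l = 1) m
  have hZ : ∀ᶠ n in atTop, ZC A (fun τ => 2 * f τ) (fun _ => True) n ≤
      gluingConst A f D U * (ENNReal.ofReal (c n) * S n) := by
    filter_upwards [eventually_ge_atTop n₀, eventually_ne_atTop 0,
      eventually_lt_of_tendsto_div_zero hN] with n hn₀ hn hNn
    exact ZC_two_mul_le hf hU hΨ hn (Nat.sub_ne_zero_of_lt hNn) fun g => hsymm g n hn₀
  have hc_growth := expGrowthSup_ofReal_of_tendsto_rpow_inv hc hclim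
  rw [pressureC_eq_expGrowthSup, pressureC_eq_expGrowthSup]
  calc expGrowthSup (ZC A (fun τ => 2 * f τ) fun _ => True)
      ≤ expGrowthSup ((fun n => ENNReal.ofReal (c n)) * S) :=
        expGrowthSup_le_of_eventually_le gluingConst_ne_top hZ
    _ ≤ expGrowthSup (fun n => ENNReal.ofReal (c n)) + expGrowthSup S :=
        expGrowthSup_mul_le (.inl (by simp [hc_growth])) (.inl (by simp [hc_growth]))
    _ = expGrowthSup S := by rw [hc_growth, zero_add]
    _ ≤ 2 * expGrowthSup (ZC A f fun l => Ψ ψ₀ l = 1) :=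
        expGrowthSup_sum_Icc_le _ two_pos (tendsto_add_sub_div hN) (tendsto_add_add_div hN _)

end Symmetry

/- STATEMENT 13: For a finitely primitive shift, an irreducible group extension, and a
Hölder continuous asymptotically symmetric `φ`, we have
2·P(φ, Ψ⁻¹(id) ∩ Σ*) ≥ P(2φ). -/
theorem stmt13 [Countable I] [Countable G] (hprim : FinPrim A) (hirr : IrrExt A ψ₀)
    (φ : (ℕ → I) → ℝ) (hφ : Holder A φ) (hsym : AsympSymm A ψ₀ φ) :
    pressureC A (fun τ => 2 * φ τ) (fun _ => True) ≤
      (2 : EReal) * pressureC A φ (fun l => Ψ ψ₀ l = 1) := by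
  obtain ⟨U, hU⟩ := hprim.exists_connects
  exact stmt13_general (hU.exists_connects_ker hirr) hφ.exists_distortionLE hsym

end Stmt13
end

section
/- Let Σ be a finitely primitive Markov shift over a countable alphabet with the big images and preimages structure, (Σ×G, σ⋊Ψ) an irreducible group-extended Markov system, and φ: Σ → ℝ Hölder continuous. Suppose φ is symmetric with respect to Ψ, P(2φ) = 0, P(φ, Ψ^{-1}(id)∩Σ*) = 0, and there exists a σ-invariant Gibbs measure μ for 2φ. Then Σ_{n∈ℕ} Σ_{ω ∈ Σⁿ ∩ Ψ^{-1}(id)} e^{S_ω φ} = ∞, i.e. φ∘π₁ is recurrent. -/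
namespace Stmt16

open scoped ENNReal

variable {I : Type*} (A : I → I → Prop)

/-- An admissible (infinite) sequence of the Markov shift. -/
def Adm (τ : ℕ → I) : Prop := ∀ n, A (τ n) (τ (n + 1))

/-- The cylinder set of a finite word inside the Markov shift. -/
def Cyl (l : List I) : Set (ℕ → I) :=
  {τ | Adm A τ ∧ ∀ i, (h : i < l.length) → τ i = l.get ⟨i, h⟩}

/-- Birkhoff (ergodic) sum `S_n f(τ)`. -/
def birk (f : (ℕ → I) → ℝ) (n : ℕ) (τ : ℕ → I) : ℝ :=
  ∑ i ∈ Finset.range n, f fun k => τ (k + i)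

/-- `S_ω f := sup_{τ ∈ [ω]} S_{|ω|} f(τ)`. -/
noncomputable def Sw (f : (ℕ → I) → ℝ) (l : List I) : ℝ :=
  sSup {y | ∃ τ ∈ Cyl A l, y = birk f l.length τ}

/-- The shift is finitely primitive. -/
def FinPrim : Prop :=
  ∃ m : ℕ, ∃ F : Set (List I), F.Finite ∧ (∀ w ∈ F, w.length = m) ∧
    ∀ i j : I, ∃ w ∈ F, (i :: (w ++ [j])).Chain' A

/-- Hölder continuity with respect to some metric `d_α`. -/
def Holder (f : (ℕ → I) → ℝ) : Prop :=
  ∃ α > (0 : ℝ), ∃ V : ℝ, ∀ n : ℕ, 1 ≤ n → ∀ τ τ' : ℕ → I, Adm A τ → Adm A τ' →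
    (∀ i < n, τ i = τ' i) → |f τ - f τ'| ≤ V * Real.exp (-α * n)

variable {G : Type*} [Group G] (ψ₀ : I → G)

/-- The semigroup homomorphism `Ψ : I* → G` induced by `ψ₀`. -/
def Ψ (l : List I) : G := (l.map ψ₀).prod

/-- Irreducibility of the group-extended Markov system `σ ⋊ Ψ`. -/
def IrrExt : Prop :=
  ∀ i j : I, ∀ g : G, ∃ w : List I, (i :: (w ++ [j])).Chain' A ∧ Ψ ψ₀ w = g

/-- Partition function over the words of length `n` in a collection `C`. -/
noncomputable def ZC (f : (ℕ → I) → ℝ) (C : List I → Prop) (n : ℕ) : ℝ≥0∞ :=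
  ∑' l : {l : List I // l.length = n ∧ l.Chain' A ∧ C l},
    ENNReal.ofReal (Real.exp (Sw A f l.val))

/-- The pressure of `f` restricted to the collection `C` of admissible words. -/
noncomputable def pressureC (f : (ℕ → I) → ℝ) (C : List I → Prop) : EReal :=
  Filter.atTop.limsup fun n : ℕ => (((n : ℝ)⁻¹ : ℝ) : EReal) * ENNReal.log (ZC A f C n)

/-- `φ` is asymptotically symmetric with respect to `Ψ`. -/
def AsympSymm (f : (ℕ → I) → ℝ) : Prop :=
  ∃ n₀ : ℕ, ∃ c : ℕ → ℝ, ∃ N : ℕ → ℕ, (∀ n, 0 < c n) ∧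
    Filter.Tendsto (fun n : ℕ => c n ^ ((n : ℝ)⁻¹)) Filter.atTop (nhds 1) ∧
    Filter.Tendsto (fun n : ℕ => (N n : ℝ) / n) Filter.atTop (nhds 0) ∧
    ∀ g : G, ∀ n : ℕ, n₀ ≤ n →
      (∑' l : {l : List I // l.length = n ∧ l.Chain' A ∧ Ψ ψ₀ l = g},
          ENNReal.ofReal (Real.exp (Sw A f l.val))) ≤
        ENNReal.ofReal (c n) *
          ∑' l : {l : List I // l.Chain' A ∧ Ψ ψ₀ l = g⁻¹ ∧
              n - N n ≤ l.length ∧ l.length ≤ n + N n},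
            ENNReal.ofReal (Real.exp (Sw A f l.val))

/-- The left shift. -/
def shift (τ : ℕ → I) : ℕ → I := fun k => τ (k + 1)

/-!
By the upper Gibbs bound, `∑_{ω ∈ Σⁿ} e^{2 S_ω φ}` is at least a constant `c > 0` for every `n`.
Write each term as `e^{S_ω φ} e^{S_ω φ}`. The second factor is at most the total weight of the words
of length `n` with value `Ψ ω`, which by symmetry is controlled by the total weight of the words
`ω'` with value `(Ψ ω)⁻¹`. Joining `ω` and `ω'` by one of finitely many words with value `1`
produces an admissible word with value `1` and length at least `n`, whose weight dominates the
product of the two weights, and `(ω, ω')` is recovered from it together with the connecting word.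
So the words with value `1` and length at least `n` have total weight at least a fixed positive
constant, for all large `n`, which is impossible if the full sum converges.
-/

section

open Filter Topology MeasureTheory

variable {A} {ψ₀} {f : (ℕ → I) → ℝ} {D : ℝ}

lemma Adm.comp_add_right {τ : ℕ → I} (hτ : Adm A τ) (m : ℕ) : Adm A fun k => τ (k + m) := by
  intro n
  simpa only [Nat.add_right_comm] using hτ (n + m)

lemma birk_add (f : (ℕ → I) → ℝ) (m n : ℕ) (τ : ℕ → I) :
    birk f (m + n) τ = birk f m τ + birk f n (fun k => τ (k + m)) := by
  simp only [birk, Finset.sum_range_add]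
  simp only [add_comm m, add_assoc]

lemma birk_const_mul (c : ℝ) (f : (ℕ → I) → ℝ) (n : ℕ) (τ : ℕ → I) :
    birk (fun σ => c * f σ) n τ = c * birk f n τ := by
  simp only [birk, Finset.mul_sum]

variable (A) in
/-- Bowen's condition: the `n`-th Birkhoff sums of `f` along two admissible sequences which agree
in the first `n` letters differ by at most `D`, uniformly in `n`. Exchanging the two sequences
shows that the one-sided bound suffices. -/
def BoundedDistortion (f : (ℕ → I) → ℝ) (D : ℝ) : Prop :=
  ∀ n : ℕ, ∀ τ τ' : ℕ → I, Adm A τ → Adm A τ' → (∀ i < n, τ i = τ' i) →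
    birk f n τ ≤ birk f n τ' + D

lemma Holder.exists_boundedDistortion (hf : Holder A f) : ∃ D, BoundedDistortion A f D := by
  obtain ⟨α, hα, V, hV⟩ := hf
  set r := Real.exp (-α)
  have hr0 : 0 ≤ r := (Real.exp_pos _).le
  have hr1 : r < 1 := Real.exp_lt_one_iff.2 (neg_lt_zero.2 hα)
  have hsum : Summable fun j : ℕ => |V| * r ^ (j + 1) :=
    ((summable_nat_add_iff 1).2 (summable_geometric_of_lt_one hr0 hr1)).mul_left _
  refine ⟨∑' j : ℕ, |V| * r ^ (j + 1), fun n τ τ' hτ hτ' hag => ?_⟩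
  have hterm : ∀ i ∈ Finset.range n,
      f (fun k => τ (k + i)) - f (fun k => τ' (k + i)) ≤ |V| * r ^ (n - 1 - i + 1) := by
    intro i hi
    have hin : i < n := Finset.mem_range.1 hi
    calc f (fun k => τ (k + i)) - f (fun k => τ' (k + i))
        ≤ V * Real.exp (-α * (n - 1 - i + 1 : ℕ)) :=
          (le_abs_self _).trans <| hV _ (by omega) _ _ (hτ.comp_add_right i)
            (hτ'.comp_add_right i) fun j hj => hag _ (by omega)
      _ = V * r ^ (n - 1 - i + 1) := by rw [mul_comm (-α), Real.exp_nat_mul]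
      _ ≤ |V| * r ^ (n - 1 - i + 1) := by gcongr; exact le_abs_self V
  rw [← sub_le_iff_le_add', birk, birk, ← Finset.sum_sub_distrib]
  calc ∑ i ∈ Finset.range n, (f (fun k => τ (k + i)) - f (fun k => τ' (k + i)))
      ≤ ∑ i ∈ Finset.range n, |V| * r ^ (n - 1 - i + 1) := Finset.sum_le_sum hterm
    _ = ∑ j ∈ Finset.range n, |V| * r ^ (j + 1) :=
        Finset.sum_range_reflect (fun j => |V| * r ^ (j + 1)) n
    _ ≤ ∑' j : ℕ, |V| * r ^ (j + 1) := hsum.sum_le_tsum _ fun j _ => by positivity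

lemma BoundedDistortion.birk_add_mem_upperBounds (hf : BoundedDistortion A f D) {l : List I}
    {τ : ℕ → I} (hτ : τ ∈ Cyl A l) :
    birk f l.length τ + D ∈ upperBounds {y | ∃ τ ∈ Cyl A l, y = birk f l.length τ} := by
  rintro y ⟨τ', hτ', rfl⟩
  exact hf _ _ _ hτ'.1 hτ.1 fun i hi => (hτ'.2 i hi).trans (hτ.2 i hi).symm

lemma BoundedDistortion.birk_le_Sw (hf : BoundedDistortion A f D) {l : List I} {τ : ℕ → I}
    (hτ : τ ∈ Cyl A l) : birk f l.length τ ≤ Sw A f l :=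
  le_csSup ⟨_, hf.birk_add_mem_upperBounds hτ⟩ ⟨τ, hτ, rfl⟩

lemma BoundedDistortion.Sw_le_birk_add (hf : BoundedDistortion A f D) {l : List I} {τ : ℕ → I}
    (hτ : τ ∈ Cyl A l) : Sw A f l ≤ birk f l.length τ + D :=
  csSup_le ⟨_, τ, hτ, rfl⟩ (hf.birk_add_mem_upperBounds hτ)

lemma mem_cyl_of_mem_cyl_append {l l' : List I} {τ : ℕ → I} (hτ : τ ∈ Cyl A (l ++ l')) :
    τ ∈ Cyl A l ∧ (fun k => τ (k + l.length)) ∈ Cyl A l' := by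
  refine ⟨⟨hτ.1, fun i hi => ?_⟩, hτ.1.comp_add_right _, fun i hi => ?_⟩
  · simpa [List.getElem_append_left hi] using hτ.2 i (by simp; omega)
  · simpa using hτ.2 (i + l.length) (by simp; omega)

lemma cons_mem_cyl {a : I} {l : List I} {τ : ℕ → I} (hτ : τ ∈ Cyl A l) (ha : A a (τ 0)) :
    (fun n => Nat.casesOn n a τ : ℕ → I) ∈ Cyl A (a :: l) := by
  refine ⟨fun n => ?_, fun i hi => ?_⟩
  · cases n with
    | zero => exact ha
    | succ n => exact hτ.1 n
  · cases i with
    | zero => rfl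
    | succ i => simpa using hτ.2 i (by simpa using hi)

lemma cyl_cons_nonempty (hA : ∀ i, ∃ j, A i j) {a : I} {l : List I} (hl : (a :: l).IsChain A) :
    (Cyl A (a :: l)).Nonempty := by
  induction l generalizing a with
  | nil =>
    choose s hs using hA
    refine ⟨fun n => s^[n] a, fun n => ?_, fun i hi => ?_⟩
    · simpa only [Function.iterate_succ_apply'] using hs _
    · obtain rfl : i = 0 := by simpa using hi
      rfl
  | cons b l ih =>
    obtain ⟨hab, hbl⟩ := List.isChain_cons_cons.1 hl
    obtain ⟨τ, hτ⟩ := ih hbl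
    have hτ0 : τ 0 = b := hτ.2 0 (by simp)
    exact ⟨_, cons_mem_cyl hτ (hτ0 ▸ hab)⟩

lemma cyl_nonempty [Nonempty I] (hA : ∀ i, ∃ j, A i j) {l : List I} (hl : l.IsChain A) :
    (Cyl A l).Nonempty := by
  cases l with
  | nil =>
    obtain ⟨τ, hτ⟩ := cyl_cons_nonempty hA (List.isChain_singleton (Classical.arbitrary I))
    exact ⟨τ, hτ.1, by simp⟩
  | cons a l => exact cyl_cons_nonempty hA hl

lemma setOf_adm_subset_iUnion_cyl (n : ℕ) :
    {τ | Adm A τ} ⊆ ⋃ ω : {l : List I // l.length = n ∧ l.IsChain A}, Cyl A ω.1 := by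
  intro τ hτ
  have hchain : (List.ofFn fun i : Fin n => τ i).IsChain A := by
    rw [List.isChain_iff_getElem]
    intro i hi
    simpa using hτ i
  exact Set.mem_iUnion.2 ⟨⟨_, List.length_ofFn, hchain⟩, hτ, fun i hi => by simp⟩

variable (A) in
/-- The weight `e^{S_ω f}` of a word `ω`, in `ℝ≥0∞` so that sums of weights always make sense. -/
noncomputable def weight (f : (ℕ → I) → ℝ) (l : List I) : ℝ≥0∞ :=
  ENNReal.ofReal (Real.exp (Sw A f l))

lemma weight_ne_zero (l : List I) : weight A f l ≠ 0 :=
  (ENNReal.ofReal_pos.2 (Real.exp_pos _)).ne'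

lemma weight_ne_top (l : List I) : weight A f l ≠ ∞ := ENNReal.ofReal_ne_top

lemma weight_mul_weight_le (hf : BoundedDistortion A f D) {l l' : List I}
    (hne : (Cyl A (l ++ l')).Nonempty) :
    weight A f l * weight A f l' ≤ ENNReal.ofReal (Real.exp (2 * D)) * weight A f (l ++ l') := by
  obtain ⟨τ, hτ⟩ := hne
  obtain ⟨hl, hl'⟩ := mem_cyl_of_mem_cyl_append hτ
  have hadd : birk f (l ++ l').length τ =
      birk f l.length τ + birk f l'.length fun k => τ (k + l.length) := by
    rw [List.length_append, birk_add]
  have hSw : Sw A f l + Sw A f l' ≤ 2 * D + Sw A f (l ++ l') := by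
    linarith [hf.birk_le_Sw hτ, hf.Sw_le_birk_add hl, hf.Sw_le_birk_add hl']
  simp only [weight, ← ENNReal.ofReal_mul (Real.exp_nonneg _), ← Real.exp_add]
  gcongr

lemma measure_adm_le_tsum_weight_sq [Countable I] [MeasurableSpace (ℕ → I)]
    (hf : BoundedDistortion A f D) {μ : Measure (ℕ → I)} {C : ℝ}
    (hμ : ∀ l : List I, l.IsChain A → ∀ τ ∈ Cyl A l,
      μ (Cyl A l) ≤ ENNReal.ofReal (C * Real.exp (birk (fun σ => 2 * f σ) l.length τ))) (n : ℕ) :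
    μ {τ | Adm A τ} ≤ ENNReal.ofReal C *
      ∑' ω : {l : List I // l.length = n ∧ l.IsChain A}, weight A f ω.1 ^ 2 := by
  have hcyl : ∀ l : List I, l.IsChain A →
      μ (Cyl A l) ≤ ENNReal.ofReal C * weight A f l ^ 2 := by
    intro l hl
    obtain hempty | ⟨τ, hτ⟩ := (Cyl A l).eq_empty_or_nonempty
    · simp [hempty]
    · calc μ (Cyl A l) ≤ ENNReal.ofReal (C * Real.exp (birk (fun σ => 2 * f σ) l.length τ)) :=
            hμ l hl τ hτ
        _ = ENNReal.ofReal C * ENNReal.ofReal (Real.exp (birk f l.length τ)) ^ 2 := by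
            rw [birk_const_mul, ENNReal.ofReal_mul' (Real.exp_nonneg _),
              ← ENNReal.ofReal_pow (Real.exp_nonneg _), ← Real.exp_nat_mul, Nat.cast_ofNat]
        _ ≤ ENNReal.ofReal C * weight A f l ^ 2 := by
            unfold weight
            gcongr
            exact hf.birk_le_Sw hτ
  calc μ {τ | Adm A τ}
      ≤ ∑' ω : {l : List I // l.length = n ∧ l.IsChain A}, μ (Cyl A ω.1) :=
        (measure_mono (setOf_adm_subset_iUnion_cyl n)).trans (measure_iUnion_le _)
    _ ≤ ∑' ω : {l : List I // l.length = n ∧ l.IsChain A},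
          ENNReal.ofReal C * weight A f ω.1 ^ 2 :=
        ENNReal.tsum_le_tsum fun ω => hcyl ω.1 ω.2.2
    _ = _ := ENNReal.tsum_mul_left

lemma Ψ_append (l l' : List I) : Ψ ψ₀ (l ++ l') = Ψ ψ₀ l * Ψ ψ₀ l' := by
  simp [Ψ]

lemma Ψ_cons (a : I) (l : List I) : Ψ ψ₀ (a :: l) = ψ₀ a * Ψ ψ₀ l := by
  simp [Ψ]

variable (A ψ₀) in
/-- A finite set of words with value `1` in `G` such that any two admissible words can be joined
to an admissible word by an element of the set. -/
structure LoopConnecting (K : Finset (List I)) : Prop where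
  Ψ_eq_one : ∀ k ∈ K, Ψ ψ₀ k = 1
  exists_isChain : ∀ ω ω' : List I, ω.IsChain A → ω'.IsChain A → ∃ k ∈ K, (ω ++ k ++ ω').IsChain A

-- A word `w` of the primitivity set from `i` to `a` and one `w'` from `a` to `j` are joined by
-- `a v a`, where irreducibility provides `v` with `Ψ v` cancelling the other factors.
lemma exists_finset_isChain_cons_append_singleton (hprim : FinPrim A) (hirr : IrrExt A ψ₀) :
    ∃ K : Finset (List I), (∀ k ∈ K, Ψ ψ₀ k = 1) ∧
      ∀ i j, ∃ k ∈ K, (i :: (k ++ [j])).IsChain A := by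
  classical
  obtain hI | ⟨⟨a⟩⟩ := isEmpty_or_nonempty I
  · exact ⟨∅, by simp, isEmptyElim⟩
  obtain ⟨-, F, hF, -, hFconn⟩ := hprim
  choose v hv hΨv using hirr a a
  let join (p : List I × List I) : List I :=
    p.1 ++ a :: (v ((Ψ ψ₀ p.1 * ψ₀ a)⁻¹ * (ψ₀ a * Ψ ψ₀ p.2)⁻¹) ++ a :: p.2)
  refine ⟨(hF.toFinset ×ˢ hF.toFinset).image join, ?_, fun i j => ?_⟩
  · rintro _ hk
    obtain ⟨p, -, rfl⟩ := Finset.mem_image.1 hk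
    simp only [join, Ψ_append, Ψ_cons, hΨv]
    group
  · obtain ⟨w, hwF, hw⟩ := hFconn i a
    obtain ⟨w', hwF', hw'⟩ := hFconn a j
    refine ⟨join (w, w'), Finset.mem_image_of_mem _ (by simp [hwF, hwF']), ?_⟩
    simp only [join, List.append_assoc, List.cons_append]
    exact (List.isChain_split (l₁ := i :: w)).2 ⟨hw, (List.isChain_split (l₁ := a :: v _)).2
      ⟨hv _, hw'⟩⟩

lemma exists_loopConnecting (hprim : FinPrim A) (hirr : IrrExt A ψ₀) :
    ∃ K, LoopConnecting A ψ₀ K := by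
  classical
  obtain ⟨K, hK, hconn⟩ := exists_finset_isChain_cons_append_singleton hprim hirr
  refine ⟨insert [] K, ?_, fun ω ω' hω hω' => ?_⟩
  · rw [Finset.forall_mem_insert]
    exact ⟨rfl, hK⟩
  · obtain rfl | ⟨p, i, rfl⟩ := List.eq_nil_or_concat' ω
    · exact ⟨[], by simp, by simpa using hω'⟩
    obtain rfl | ⟨j, q, rfl⟩ := (eq_or_ne ω' []).imp_right List.exists_cons_of_ne_nil
    · exact ⟨[], by simp, by simpa using hω⟩
    obtain ⟨k, hk, hikj⟩ := hconn i j
    refine ⟨k, Finset.mem_insert_of_mem hk, ?_⟩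
    simpa using List.isChain_split.2
      ⟨hω, (List.isChain_split (l₁ := i :: k)).2 ⟨by simpa using hikj, hω'⟩⟩

lemma LoopConnecting.exists_rel {K : Finset (List I)} (hK : LoopConnecting A ψ₀ K) (i : I) :
    ∃ j, A i j := by
  obtain ⟨k, -, hk⟩ := hK.exists_isChain [i] [i] (List.isChain_singleton i)
    (List.isChain_singleton i)
  cases k with
  | nil => exact ⟨i, (List.isChain_cons_cons.1 hk).1⟩
  | cons b k => exact ⟨b, (List.isChain_cons_cons.1 hk).1⟩

variable (A ψ₀) in
/-- The nonempty words of `Σ* ∩ Ψ⁻¹(id)`. -/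
def loops : Set (List I) := {l | l ≠ [] ∧ l.IsChain A ∧ Ψ ψ₀ l = 1}

lemma weight_mul_weight_le_sum_indicator_loops [Nonempty I] (hf : BoundedDistortion A f D)
    {K : Finset (List I)} (hK : LoopConnecting A ψ₀ K) {ω ω' : List I} (hne : ω ≠ [])
    (hω : ω.IsChain A) (hω' : ω'.IsChain A) (hΨ : Ψ ψ₀ ω' = (Ψ ψ₀ ω)⁻¹) :
    weight A f ω * weight A f ω' ≤ ENNReal.ofReal (Real.exp (2 * D)) ^ 2 *
      ∑ k ∈ K, (weight A f k)⁻¹ * (loops A ψ₀).indicator (weight A f) (ω ++ k ++ ω') := by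
  obtain ⟨k, hkK, hchain⟩ := hK.exists_isChain ω ω' hω hω'
  set B := ENNReal.ofReal (Real.exp (2 * D))
  have hloop : ω ++ k ++ ω' ∈ loops A ψ₀ :=
    ⟨by simp [hne], hchain, by rw [Ψ_append, Ψ_append, hK.Ψ_eq_one k hkK, hΨ]; group⟩
  have hcyl : (Cyl A (ω ++ k ++ ω')).Nonempty := cyl_nonempty hK.exists_rel hchain
  have hmul : weight A f ω * weight A f k * weight A f ω' ≤ B ^ 2 * weight A f (ω ++ k ++ ω') :=
    calc weight A f ω * weight A f k * weight A f ω'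
        ≤ B * weight A f (ω ++ k) * weight A f ω' :=
          mul_le_mul_left (weight_mul_weight_le hf
            (hcyl.mono fun τ hτ => (mem_cyl_of_mem_cyl_append hτ).1)) _
      _ ≤ B * (B * weight A f (ω ++ k ++ ω')) := by
          rw [mul_assoc]
          exact mul_le_mul_right (weight_mul_weight_le hf hcyl) _
      _ = B ^ 2 * weight A f (ω ++ k ++ ω') := by ring
  calc weight A f ω * weight A f ω'
      = (weight A f k)⁻¹ * (weight A f ω * weight A f k * weight A f ω') := by
        rw [mul_right_comm, mul_comm _ (weight A f k),
          ENNReal.inv_mul_cancel_left (weight_ne_zero k) (weight_ne_top k)]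
    _ ≤ (weight A f k)⁻¹ * (B ^ 2 * weight A f (ω ++ k ++ ω')) := by gcongr
    _ = B ^ 2 * ((weight A f k)⁻¹ *
          (loops A ψ₀).indicator (weight A f) (ω ++ k ++ ω')) := by
        rw [Set.indicator_of_mem hloop]; ring
    _ ≤ _ := by
        gcongr
        exact Finset.single_le_sum
          (f := fun k => (weight A f k)⁻¹ *
            (loops A ψ₀).indicator (weight A f) (ω ++ k ++ ω')) (fun _ _ => zero_le) hkK

lemma tsum_tsum_append_append_le {α : Type*} {n : ℕ} {S : Set (List α)}
    (hS : ∀ l ∈ S, l.length = n) (k : List α) (F : List α → ℝ≥0∞) :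
    ∑' ω : S, ∑' ω' : List α, F (ω ++ k ++ ω') ≤ ∑' l : {l : List α | n ≤ l.length}, F l := by
  let join (p : S × List α) : {l : List α | n ≤ l.length} :=
    ⟨p.1 ++ k ++ p.2, by simp [hS p.1 p.1.2]⟩
  have hjoin : Function.Injective join := by
    rintro ⟨⟨ω₁, h₁⟩, ω₁'⟩ ⟨⟨ω₂, h₂⟩, ω₂'⟩ h
    have hlen : ω₁.length = ω₂.length := (hS _ h₁).trans (hS _ h₂).symm
    obtain ⟨hω, hω'⟩ := List.append_inj (Subtype.ext_iff.1 h) (by simp [hlen])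
    simp_all
  rw [← ENNReal.tsum_prod (f := fun (ω : S) ω' => F (ω ++ k ++ ω'))]
  exact ENNReal.tsum_comp_le_tsum_of_injective hjoin fun l => F l

lemma tsum_tsum_sum_append_append_le {α : Type*} {n : ℕ} {S : Set (List α)}
    (hS : ∀ l ∈ S, l.length = n) (K : Finset (List α)) (c F : List α → ℝ≥0∞) :
    ∑' ω : S, ∑' ω' : List α, ∑ k ∈ K, c k * F (ω ++ k ++ ω') ≤
      (∑ k ∈ K, c k) * ∑' l : {l : List α | n ≤ l.length}, F l := by
  simp_rw [Summable.tsum_finsetSum fun _ _ => ENNReal.summable, ENNReal.tsum_mul_left,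
    Finset.sum_mul]
  gcongr with k
  exact tsum_tsum_append_append_le hS k F

variable (A ψ₀) in
/-- Symmetry of `f` with respect to `Ψ` up to a constant `C`: for large `n` and every `g`, the words
of length `n` with value `g` weigh at most `C` times the words with value `g⁻¹`. Any window of
lengths around `n` allowed for the latter gives a stronger condition, so all lengths are taken. -/
def SymmUpTo (f : (ℕ → I) → ℝ) (C : ℝ≥0∞) : Prop :=
  ∀ᶠ n in atTop, ∀ g : G, ZC A f (fun l => Ψ ψ₀ l = g) n ≤
    C * ∑' l : {l : List I | l.IsChain A ∧ Ψ ψ₀ l = g⁻¹}, weight A f l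

lemma symmUpTo_of_window {n₀ : ℕ} {c : ℕ → ℝ} {N : ℕ → ℕ} {Cb : ℝ} (hc : ∀ n, c n ≤ Cb)
    (h : ∀ g : G, ∀ n : ℕ, n₀ ≤ n → ZC A f (fun l => Ψ ψ₀ l = g) n ≤
      ENNReal.ofReal (c n) * ∑' l : {l : List I | l.IsChain A ∧ Ψ ψ₀ l = g⁻¹ ∧
        n - N n ≤ l.length ∧ l.length ≤ n + N n}, weight A f l) :
    SymmUpTo A ψ₀ f (ENNReal.ofReal Cb) := by
  filter_upwards [eventually_ge_atTop n₀] with n hn g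
  refine (h g n hn).trans ?_
  gcongr
  · exact hc n
  · exact ENNReal.tsum_mono_subtype _ fun l hl => ⟨hl.1, hl.2.1⟩

lemma weight_le_ZC {n : ℕ} {g : G} {ω : List I} (hlen : ω.length = n) (hω : ω.IsChain A)
    (hΨ : Ψ ψ₀ ω = g) : weight A f ω ≤ ZC A f (fun l => Ψ ψ₀ l = g) n :=
  ENNReal.le_tsum (f := fun l : {l : List I // l.length = n ∧ l.IsChain A ∧ Ψ ψ₀ l = g} =>
    weight A f l) ⟨ω, hlen, hω, hΨ⟩

lemma tsum_weight_sq_le_tsum_loops [Nonempty I] (hf : BoundedDistortion A f D)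
    {K : Finset (List I)} (hK : LoopConnecting A ψ₀ K) {n : ℕ} (hn : n ≠ 0) {C : ℝ≥0∞}
    (hsymm : ∀ g : G, ZC A f (fun l => Ψ ψ₀ l = g) n ≤
      C * ∑' l : {l : List I | l.IsChain A ∧ Ψ ψ₀ l = g⁻¹}, weight A f l) :
    ∑' ω : {l : List I // l.length = n ∧ l.IsChain A}, weight A f ω.1 ^ 2 ≤
      C * ENNReal.ofReal (Real.exp (2 * D)) ^ 2 * (∑ k ∈ K, (weight A f k)⁻¹) *
        ∑' l : {l : List I | n ≤ l.length}, (loops A ψ₀).indicator (weight A f) l := by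
  set B := ENNReal.ofReal (Real.exp (2 * D))
  set F := (loops A ψ₀).indicator (weight A f)
  have hword : ∀ ω : {l : List I // l.length = n ∧ l.IsChain A}, weight A f ω.1 ^ 2 ≤
      C * B ^ 2 * ∑' ω', ∑ k ∈ K, (weight A f k)⁻¹ * F (ω.1 ++ k ++ ω') := by
    rintro ⟨ω, hlen, hω⟩
    have hne : ω ≠ [] := by
      rintro rfl
      exact hn hlen.symm
    let T := {l : List I | l.IsChain A ∧ Ψ ψ₀ l = (Ψ ψ₀ ω)⁻¹}
    calc weight A f ω ^ 2 = weight A f ω * weight A f ω := sq _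
      _ ≤ weight A f ω * (C * ∑' ω' : T, weight A f ω') := by
          gcongr
          exact (weight_le_ZC hlen hω rfl).trans (hsymm _)
      _ = C * ∑' ω' : T, weight A f ω * weight A f ω' := by
          rw [mul_left_comm, ENNReal.tsum_mul_left]
      _ ≤ C * ∑' ω' : T, B ^ 2 * ∑ k ∈ K, (weight A f k)⁻¹ * F (ω ++ k ++ ω') :=
          mul_le_mul_right (ENNReal.tsum_le_tsum fun ω' =>
            weight_mul_weight_le_sum_indicator_loops hf hK hne hω ω'.2.1 ω'.2.2) _
      _ ≤ C * ∑' ω', B ^ 2 * ∑ k ∈ K, (weight A f k)⁻¹ * F (ω ++ k ++ ω') := by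
          gcongr
          exact ENNReal.tsum_comp_le_tsum_of_injective Subtype.val_injective
            fun ω' => B ^ 2 * ∑ k ∈ K, (weight A f k)⁻¹ * F (ω ++ k ++ ω')
      _ = _ := by rw [ENNReal.tsum_mul_left, mul_assoc]
  refine (ENNReal.tsum_le_tsum hword).trans ?_
  rw [ENNReal.tsum_mul_left, mul_assoc (C * B ^ 2)]
  gcongr
  exact tsum_tsum_sum_append_append_le (S := {l | l.length = n ∧ l.IsChain A})
    (fun l hl => hl.1) K _ F

lemma tendsto_tsum_setOf_le_atTop_zero {α : Type*} {F : α → ℝ≥0∞} (hF : ∑' a, F a ≠ ∞)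
    (u : α → ℕ) : Tendsto (fun n => ∑' a : {a | n ≤ u a}, F a) atTop (𝓝 0) := by
  refine ENNReal.tendsto_nhds_zero.2 fun ε hε => ?_
  obtain ⟨s, hs⟩ :=
    (ENNReal.tendsto_nhds_zero.1 (ENNReal.tendsto_tsum_compl_atTop_zero hF) ε hε).exists
  filter_upwards [eventually_gt_atTop (s.sup u)] with n hn
  refine (ENNReal.tsum_mono_subtype F fun a (ha : n ≤ u a) => ?_).trans hs
  exact fun has => (hn.trans_le ha).not_ge (Finset.le_sup has)

theorem stmt16_general [Countable I] [MeasurableSpace (ℕ → I)]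
    (hprim : FinPrim A) (hirr : IrrExt A ψ₀)
    {φ : (ℕ → I) → ℝ} (hφ : BoundedDistortion A φ D)
    {C : ℝ≥0∞} (hC : C ≠ ∞) (hsymm : SymmUpTo A ψ₀ φ C)
    {μ : Measure (ℕ → I)} (hμ : μ {τ | Adm A τ} ≠ 0) {Cμ : ℝ}
    (hGibbs : ∀ l : List I, l.IsChain A → ∀ τ ∈ Cyl A l,
      μ (Cyl A l) ≤ ENNReal.ofReal (Cμ * Real.exp (birk (fun σ => 2 * φ σ) l.length τ))) :
    ∑' l : loops A ψ₀, weight A φ l = ∞ := by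
  by_contra hfin
  obtain ⟨τ, -⟩ := nonempty_of_measure_ne_zero hμ
  have : Nonempty I := ⟨τ 0⟩
  obtain ⟨K, hK⟩ := exists_loopConnecting hprim hirr
  let tail (n : ℕ) := ∑' l : {l : List I | n ≤ l.length}, (loops A ψ₀).indicator (weight A φ) l
  let B := ENNReal.ofReal Cμ *
    (C * ENNReal.ofReal (Real.exp (2 * D)) ^ 2 * ∑ k ∈ K, (weight A φ k)⁻¹)
  have hB : B ≠ ∞ := by
    have hsum : ∑ k ∈ K, (weight A φ k)⁻¹ ≠ ∞ :=
      ENNReal.sum_ne_top.2 fun k _ => ENNReal.inv_ne_top.2 (weight_ne_zero k)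
    finiteness
  have hle : ∀ᶠ n in atTop, μ {τ | Adm A τ} ≤ B * tail n := by
    filter_upwards [hsymm, eventually_ne_atTop 0] with n hn hn0
    rw [mul_assoc]
    exact (measure_adm_le_tsum_weight_sq hφ hGibbs n).trans <| mul_le_mul_right
      (tsum_weight_sq_le_tsum_loops hφ hK hn0 hn) _
  have htail : Tendsto (fun n => B * tail n) atTop (𝓝 0) := by
    rw [tsum_subtype] at hfin
    simpa only [mul_zero] using ENNReal.Tendsto.const_mul
      (tendsto_tsum_setOf_le_atTop_zero hfin List.length) (Or.inr hB)
  exact hμ (nonpos_iff_eq_zero.1 (ge_of_tendsto htail hle))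

end

/- STATEMENT 16: Let Σ be finitely primitive, (Σ×G, σ⋊Ψ) irreducible, φ Hölder and
symmetric with respect to Ψ (asymptotically symmetric with bounded constants), with
P(2φ) = 0 and P(φ, Ψ⁻¹(id) ∩ Σ*) = 0, and suppose there is a σ-invariant Gibbs measure
μ for 2φ supported on Σ.  Then Σ_{ω ∈ Σ* ∩ Ψ⁻¹(id)} e^{S_ω φ} = ∞, i.e. φ∘π₁ is
recurrent. -/
theorem stmt16 [Countable I] [Countable G] [MeasurableSpace (ℕ → I)]
    (hprim : FinPrim A) (hirr : IrrExt A ψ₀)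
    (φ : (ℕ → I) → ℝ) (hφ : Holder A φ)
    (hsym : ∃ n₀ : ℕ, ∃ c : ℕ → ℝ, ∃ N : ℕ → ℕ, (∀ n, 0 < c n) ∧
      (∃ Cb : ℝ, ∀ n, c n ≤ Cb) ∧
      Filter.Tendsto (fun n : ℕ => c n ^ ((n : ℝ)⁻¹)) Filter.atTop (nhds 1) ∧
      Filter.Tendsto (fun n : ℕ => (N n : ℝ) / n) Filter.atTop (nhds 0) ∧
      ∀ g : G, ∀ n : ℕ, n₀ ≤ n →
        (∑' l : {l : List I // l.length = n ∧ l.Chain' A ∧ Ψ ψ₀ l = g},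
            ENNReal.ofReal (Real.exp (Sw A φ l.val))) ≤
          ENNReal.ofReal (c n) *
            ∑' l : {l : List I // l.Chain' A ∧ Ψ ψ₀ l = g⁻¹ ∧
                n - N n ≤ l.length ∧ l.length ≤ n + N n},
              ENNReal.ofReal (Real.exp (Sw A φ l.val)))
    (hP2 : pressureC A (fun τ => 2 * φ τ) (fun _ => True) = 0)
    (hPid : pressureC A φ (fun l => Ψ ψ₀ l = 1) = 0)
    (μ : MeasureTheory.Measure (ℕ → I))
    (hsupp : μ {τ | Adm A τ} = 1)
    (hinv : ∀ s : Set (ℕ → I), μ (shift ⁻¹' s) = μ s)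
    (hGibbs : ∃ Cμ > (0 : ℝ), ∀ l : List I, l.Chain' A → ∀ τ ∈ Cyl A l,
      ENNReal.ofReal (Cμ⁻¹ * Real.exp (birk (fun σ => 2 * φ σ) l.length τ)) ≤ μ (Cyl A l) ∧
      μ (Cyl A l) ≤ ENNReal.ofReal (Cμ * Real.exp (birk (fun σ => 2 * φ σ) l.length τ))) :
    (∑' l : {l : List I // l ≠ [] ∧ l.Chain' A ∧ Ψ ψ₀ l = 1},
        ENNReal.ofReal (Real.exp (Sw A φ l.val))) = ⊤ := by
  obtain ⟨n₀, c, N, -, ⟨Cb, hCb⟩, -, -, hsym⟩ := hsym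
  obtain ⟨Cμ, -, hGibbs⟩ := hGibbs
  obtain ⟨D, hD⟩ := hφ.exists_boundedDistortion
  exact stmt16_general hprim hirr hD ENNReal.ofReal_ne_top (symmUpTo_of_window hCb hsym)
    (μ := μ) (by simp [hsupp]) fun l hl τ hτ => (hGibbs l hl τ hτ).2

end Stmt16
end

section
/- Let F_d be the free group on d ≥ 2 generators and N a non-trivial normal subgroup such that the quotient F_d/N is amenable, and let Φ be a conformal GDMS associated to F_d such that (N,Φ) is asymptotically symmetric. Then the exponents of convergence satisfy δ_N = δ, where δ_N = inf{u : Σ_{ω∈N} e^{u S_ω ζ} < ∞} and δ = inf{u : Σ_{ω∈F_d} e^{u S_ω ζ} < ∞}. (This may be reduced to: amenability of F_d/N together with asymptotic symmetry of the constant-free potential u ζ implies the restricted pressure P(uζ, N\{id}) equals the full pressure P(uζ) for each u, whence the critical exponents coincide.) -/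
namespace Stmt18

/-- Letters: the symmetric generating set `{g_1^{±1},…,g_d^{±1}}` of the free group. -/
abbrev Letter (d : ℕ) := Fin d × Bool

/-- Formal inverse of a letter. -/
def linv {d : ℕ} (x : Letter d) : Letter d := (x.1, !x.2)

/-- The element of the free group represented by a letter. -/
def toG {d : ℕ} (x : Letter d) : FreeGroup (Fin d) := FreeGroup.mk [x]

/-- The element of the free group represented by a finite word. -/
def prodL {d : ℕ} (l : List (Letter d)) : FreeGroup (Fin d) := (l.map toG).prod

/-- A finite word is reduced. -/
def Red {d : ℕ} (l : List (Letter d)) : Prop := l.Chain' fun a b => b ≠ linv a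

/-- An infinite word is reduced (i.e. lies in the shift space Σ). -/
def Adm {d : ℕ} (τ : ℕ → Letter d) : Prop := ∀ n, τ (n + 1) ≠ linv (τ n)

/-- The cylinder set of a finite word in Σ. -/
def Cyl {d : ℕ} (l : List (Letter d)) : Set (ℕ → Letter d) :=
  {τ | Adm τ ∧ ∀ i, (h : i < l.length) → τ i = l.get ⟨i, h⟩}

/-- Birkhoff (ergodic) sum `S_n f(τ)`. -/
def birk {d : ℕ} (f : (ℕ → Letter d) → ℝ) (n : ℕ) (τ : ℕ → Letter d) : ℝ :=
  ∑ i ∈ Finset.range n, f fun k => τ (k + i)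

/-- `S_ω f := sup_{τ ∈ [ω]} S_{|ω|} f(τ)`. -/
noncomputable def Sw {d : ℕ} (f : (ℕ → Letter d) → ℝ) (l : List (Letter d)) : ℝ :=
  sSup {y | ∃ τ ∈ Cyl l, y = birk f l.length τ}

/-- `S_ω f` for a group element `ω ∈ F_d`, via its reduced word. -/
noncomputable def Sx {d : ℕ} (f : (ℕ → Letter d) → ℝ) (x : FreeGroup (Fin d)) : ℝ :=
  Sw f x.toWord

/-- Hölder continuity on Σ with respect to some metric `d_α`. -/
def Holder {d : ℕ} (f : (ℕ → Letter d) → ℝ) : Prop :=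
  ∃ α > (0 : ℝ), ∃ V : ℝ, ∀ n : ℕ, 1 ≤ n → ∀ τ τ' : ℕ → Letter d, Adm τ → Adm τ' →
    (∀ i < n, τ i = τ' i) → |f τ - f τ'| ≤ V * Real.exp (-α * n)

/-- `ζ` qualifies as the geometric potential of a conformal GDMS associated to `F_d`:
it is Hölder continuous and bounded above by `log s` for some contraction ratio
`0 < s < 1` (so that `sup ζ < 0`). -/
def GeomPot {d : ℕ} (ζ : (ℕ → Letter d) → ℝ) : Prop :=
  Holder ζ ∧ ∃ s : ℝ, 0 < s ∧ s < 1 ∧ ∀ τ, ζ τ ≤ Real.log s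

/-- A discrete group is amenable if it carries a left-invariant finitely additive
probability measure defined on all subsets. -/
def IsAmenable (H : Type*) [Group H] : Prop :=
  ∃ m : Set H → ℝ, (∀ s, 0 ≤ m s) ∧ m Set.univ = 1 ∧
    (∀ s t : Set H, Disjoint s t → m (s ∪ t) = m s + m t) ∧
    ∀ (h : H) (s : Set H), m ((h * ·) '' s) = m s

/-- `(N, ζ)` is asymptotically symmetric: for each `u` there are constants
`c_n` with `c_n^{1/n} → 1` and `N_n` with `N_n/n → 0` such that for all `g` and all
large `n`, `Σ_{ω ∈ Ng, |ω| = n} e^{u S_ω ζ} ≤ c_n Σ_{ω ∈ Ng⁻¹, n-N_n ≤ |ω| ≤ n+N_n}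
e^{u S_ω ζ}` (sums over reduced words). -/
def AsympSymm {d : ℕ} (N : Subgroup (FreeGroup (Fin d))) (ζ : (ℕ → Letter d) → ℝ) : Prop :=
  ∀ u : ℝ, ∃ n₀ : ℕ, ∃ c : ℕ → ℝ, ∃ M : ℕ → ℕ, (∀ n, 0 < c n) ∧
    Filter.Tendsto (fun n : ℕ => c n ^ ((n : ℝ)⁻¹)) Filter.atTop (nhds 1) ∧
    Filter.Tendsto (fun n : ℕ => (M n : ℝ) / n) Filter.atTop (nhds 0) ∧
    ∀ g : FreeGroup (Fin d), ∀ n : ℕ, n₀ ≤ n →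
      (∑' l : {l : List (Letter d) // l.length = n ∧ Red l ∧ prodL l * g⁻¹ ∈ N},
          Real.exp (u * Sw ζ l.val)) ≤
        c n * ∑' l : {l : List (Letter d) // Red l ∧ prodL l * g ∈ N ∧
            n - M n ≤ l.length ∧ l.length ≤ n + M n},
          Real.exp (u * Sw ζ l.val)

/-!
Suppose that `∑ e^{u S_x ζ}` converges over `N`. Reduced words can be joined with bounded
distortion through connecting words in `N` of a fixed length. Hence the Green function `H` on
`F_d/N`, the total weight of each fibre of `F_d → F_d/N`, is finite, and each sphere sum
`∑_{|x| = n} e^{u S_x ζ} H(x⁻¹y)` is at most `K H(y)` with `K` independent of `n`. Asymptotic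
symmetry gives the same bound for `H(xy)` in place of `H(x⁻¹y)`, up to a subexponential factor.

For each `x`, an invariant mean gives total mass one to the set `{H ≤ H(x ·)}` and the
`x`-translate of its complement, on which `H ≤ H(x⁻¹ ·)`. Averaging the two bounds over these sets
shows that the sums `∑_{|x| = n} e^{u S_x ζ}` themselves grow subexponentially. As `sup ζ < 0`, the
series over `F_d` therefore converges at every exponent above `u`.
-/

open Set Filter Function ExpGrowth
open scoped ENNReal Topology

theorem csInf_eq_csInf_of_forall_Ioi_subset {α : Type*} [ConditionallyCompleteLinearOrder α]
    [DenselyOrdered α] [NoMaxOrder α] {s t : Set α} (hs : BddBelow s) (hts : t ⊆ s)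
    (h : ∀ u ∈ s, Ioi u ⊆ t) : sInf s = sInf t := by
  rcases s.eq_empty_or_nonempty with rfl | ⟨u₀, hu₀⟩
  · rw [subset_empty_iff.1 hts]
  have ht : t.Nonempty := nonempty_Ioi.mono (h u₀ hu₀)
  refine le_antisymm (csInf_le_csInf hs ht hts) (le_csInf ⟨u₀, hu₀⟩ fun u hu ↦ ?_)
  simpa using csInf_le_csInf (hs.mono hts) nonempty_Ioi (h u hu)

theorem sum_range_pow_sub_le {r : ℝ} (hr₀ : 0 ≤ r) (hr₁ : r < 1) (n : ℕ) :
    ∑ i ∈ Finset.range n, r ^ (n - i) ≤ (1 - r)⁻¹ := calc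
  ∑ i ∈ Finset.range n, r ^ (n - i) ≤ ∑ i ∈ Finset.range (n + 1), r ^ (n - i) := by
    rw [Finset.sum_range_succ]
    exact le_add_of_nonneg_right (pow_nonneg hr₀ _)
  _ = ∑ i ∈ Finset.range (n + 1), r ^ i := Finset.sum_flip fun i ↦ r ^ i
  _ ≤ (1 - r)⁻¹ := by
    rw [← tsum_geometric_of_lt_one hr₀ hr₁]
    exact (summable_geometric_of_lt_one hr₀ hr₁).sum_le_tsum _ fun i _ ↦ pow_nonneg hr₀ i

section FinitelyAdditive

variable {G ι : Type*} {m : Set G → ℝ}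

open Classical in
theorem sum_mul_inter_le (hm : ∀ s, 0 ≤ m s)
    (hadd : ∀ s t : Set G, Disjoint s t → m (s ∪ t) = m s + m t) (c : ι → ℝ) (A : ι → Set G)
    (S : Finset ι) {E : Set G} {K : ℝ} (hK : ∀ x ∈ E, ∑ i ∈ S with x ∈ A i, c i ≤ K) :
    ∑ i ∈ S, c i * m (A i ∩ E) ≤ K * m E := by
  induction S using Finset.induction_on generalizing E K with
  | empty =>
    rcases E.eq_empty_or_nonempty with rfl | ⟨x, hx⟩
    · have hempty : m ∅ = 0 := by simpa using hadd ∅ ∅ (disjoint_empty _)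
      simp [hempty]
    · simpa using mul_nonneg (hK x hx) (hm E)
  | insert j S hj ih =>
    have hsplit (B : Set G) : m (B ∩ E) = m (B ∩ (E ∩ A j)) + m (B ∩ (E \ A j)) := by
      rw [← hadd _ _ (disjoint_sdiff_right.mono (inter_subset_right.trans inter_subset_right)
        inter_subset_right), ← inter_union_distrib_left, inter_union_sdiff]
    have hin : ∑ i ∈ S, c i * m (A i ∩ (E ∩ A j)) ≤ (K - c j) * m (E ∩ A j) := ih fun x hx ↦ by
      have := hK x hx.1
      rw [Finset.filter_insert, if_pos hx.2, Finset.sum_insert (by simp [hj])] at this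
      linarith
    have hout : ∑ i ∈ S, c i * m (A i ∩ (E \ A j)) ≤ K * m (E \ A j) := ih fun x hx ↦ by
      simpa only [Finset.filter_insert, if_neg hx.2] using hK x hx.1
    calc ∑ i ∈ insert j S, c i * m (A i ∩ E)
        = c j * m (E ∩ A j) + (∑ i ∈ S, c i * m (A i ∩ (E ∩ A j))
            + ∑ i ∈ S, c i * m (A i ∩ (E \ A j))) := by
          rw [Finset.sum_insert hj, inter_comm (A j), ← Finset.sum_add_distrib]
          simp only [hsplit, mul_add]
      _ ≤ c j * m (E ∩ A j) + ((K - c j) * m (E ∩ A j) + K * m (E \ A j)) := by gcongr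
      _ = K * (m (E ∩ A j) + m (E \ A j)) := by ring
      _ = K * m E := by simpa using congrArg (K * ·) (hsplit univ).symm

theorem sum_mul_le_of_forall_mem_le (hm : ∀ s, 0 ≤ m s)
    (hadd : ∀ s t : Set G, Disjoint s t → m (s ∪ t) = m s + m t) {c : ι → ℝ} {A : ι → Set G}
    {S : Finset ι} (hc : ∀ i, 0 ≤ c i) {H : G → ℝ} (hH : ∀ x, 0 < H x) {F : ι → G → ℝ}
    (hF : ∀ i x, 0 ≤ F i x) (hA : ∀ i, ∀ x ∈ A i, H x ≤ F i x) {K : ℝ}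
    (hK : ∀ x, ∑ i ∈ S, c i * F i x ≤ K * H x) : ∑ i ∈ S, c i * m (A i) ≤ K * m univ := by
  classical
  have hcount (x : G) : ∑ i ∈ S with x ∈ A i, c i ≤ K := by
    refine le_of_mul_le_mul_right ?_ (hH x)
    calc (∑ i ∈ S with x ∈ A i, c i) * H x
        ≤ ∑ i ∈ S with x ∈ A i, c i * F i x := by
          rw [Finset.sum_mul]
          exact Finset.sum_le_sum fun i hi ↦
            mul_le_mul_of_nonneg_left (hA i x (Finset.mem_filter.1 hi).2) (hc i)
      _ ≤ ∑ i ∈ S, c i * F i x := Finset.sum_le_sum_of_subset_of_nonneg (Finset.filter_subset _ _)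
          fun i _ _ ↦ mul_nonneg (hc i) (hF i x)
      _ ≤ K * H x := hK x
  simpa using sum_mul_inter_le hm hadd c A S (E := univ) fun x _ ↦ hcount x

end FinitelyAdditive

section Amenable

variable {G ι : Type*} [Group G]

theorem IsAmenable.sum_le_add (hG : IsAmenable G) (S : Finset ι) (a : ι → G) {c : ι → ℝ}
    (hc : ∀ i, 0 ≤ c i) {H : G → ℝ} (hH : ∀ x, 0 < H x) {K₁ K₂ : ℝ}
    (h₁ : ∀ x, ∑ i ∈ S, c i * H (a i * x) ≤ K₁ * H x)
    (h₂ : ∀ x, ∑ i ∈ S, c i * H ((a i)⁻¹ * x) ≤ K₂ * H x) :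
    ∑ i ∈ S, c i ≤ K₁ + K₂ := by
  obtain ⟨m, hm, huniv, hadd, hinv⟩ := hG
  let A (i : ι) : Set G := {x | H x ≤ H (a i * x)}
  let B (i : ι) : Set G := (a i * ·) '' (A i)ᶜ
  have hB : ∀ i, ∀ x ∈ B i, H x ≤ H ((a i)⁻¹ * x) := by
    rintro i _ ⟨x, hx, rfl⟩
    have hlt : H (a i * x) < H x := not_le.1 hx
    simpa only [inv_mul_cancel_left] using hlt.le
  have hAB (i : ι) : m (A i) + m (B i) = 1 := by
    rw [hinv, ← hadd _ _ disjoint_compl_right, union_compl_self, huniv]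
  have hmA : ∑ i ∈ S, c i * m (A i) ≤ K₁ * m univ :=
    sum_mul_le_of_forall_mem_le hm hadd hc hH (fun _ _ ↦ (hH _).le) (fun _ _ hx ↦ hx) h₁
  have hmB : ∑ i ∈ S, c i * m (B i) ≤ K₂ * m univ :=
    sum_mul_le_of_forall_mem_le hm hadd hc hH (fun _ _ ↦ (hH _).le) hB h₂
  calc ∑ i ∈ S, c i = ∑ i ∈ S, c i * m (A i) + ∑ i ∈ S, c i * m (B i) := by
        simp only [← Finset.sum_add_distrib, ← mul_add, hAB, mul_one]
    _ ≤ K₁ + K₂ := by simpa only [huniv, mul_one] using add_le_add hmA hmB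

theorem IsAmenable.tsum_le_add (hG : IsAmenable G) (a : ι → G) (c : ι → ℝ≥0∞) {H : G → ℝ≥0∞}
    (hH₀ : ∀ x, H x ≠ 0) (hH : ∀ x, H x ≠ ∞) {K₁ K₂ : ℝ≥0∞}
    (h₁ : ∀ x, ∑' i, c i * H (a i * x) ≤ K₁ * H x)
    (h₂ : ∀ x, ∑' i, c i * H ((a i)⁻¹ * x) ≤ K₂ * H x) :
    ∑' i, c i ≤ K₁ + K₂ := by
  rcases eq_or_ne K₁ ∞ with rfl | hK₁
  · simp
  rcases eq_or_ne K₂ ∞ with rfl | hK₂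
  · simp
  have hterm {b : ι → G} {K : ℝ≥0∞} (hK : K ≠ ∞)
      (h : ∀ x, ∑' i, c i * H (b i * x) ≤ K * H x) (i : ι) (x : G) : c i * H (b i * x) ≠ ∞ :=
    ne_top_of_le_ne_top (ENNReal.mul_ne_top hK (hH x)) ((ENNReal.le_tsum i).trans (h x))
  have hreal {b : ι → G} {K : ℝ≥0∞} (hK : K ≠ ∞)
      (h : ∀ x, ∑' i, c i * H (b i * x) ≤ K * H x) (S : Finset ι) (x : G) :
      ∑ i ∈ S, (c i).toReal * (H (b i * x)).toReal ≤ K.toReal * (H x).toReal := by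
    simp only [← ENNReal.toReal_mul]
    rw [← ENNReal.toReal_sum fun i _ ↦ hterm hK h i x]
    exact ENNReal.toReal_mono (ENNReal.mul_ne_top hK (hH x)) ((ENNReal.sum_le_tsum S).trans (h x))
  have hc (i : ι) : c i ≠ ∞ := fun htop ↦
    hterm hK₁ h₁ i 1 (by rw [htop, ENNReal.top_mul (hH₀ _)])
  refine ENNReal.summable.tsum_le_of_sum_le fun S ↦ ?_
  have hS := hG.sum_le_add S a (fun _ ↦ ENNReal.toReal_nonneg)
    (fun x ↦ ENNReal.toReal_pos (hH₀ x) (hH x)) (hreal hK₁ h₁ S) (hreal hK₂ h₂ S)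
  rwa [← ENNReal.toReal_sum fun i _ ↦ hc i, ← ENNReal.toReal_add hK₁ hK₂,
    ENNReal.toReal_le_toReal (ENNReal.sum_ne_top.2 fun i _ ↦ hc i) (by finiteness)] at hS

end Amenable

section Growth

theorem tsum_ne_top_of_expGrowthSup_neg {z : ℕ → ℝ≥0∞} (hz : ∀ n, z n ≠ ∞)
    (h : expGrowthSup z < 0) : ∑' n, z n ≠ ∞ := by
  obtain ⟨a, hza, ha⟩ := exists_between h
  obtain ⟨n₀, hn₀⟩ := eventually_atTop.1 (eventually_le_exp hza)
  have htail (n : ℕ) : z (n + n₀) ≤ a.exp ^ n := calc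
    z (n + n₀) ≤ (a * (n + n₀ : ℕ)).exp := hn₀ _ le_add_self
    _ = a.exp ^ (n + n₀) := by rw [mul_comm, EReal.exp_nmul]
    _ ≤ a.exp ^ n := pow_le_pow_right_of_le_one' (EReal.exp_le_one_iff.2 ha.le) le_self_add
  rw [← ENNReal.summable.sum_add_tsum_nat_add' (k := n₀)]
  refine ENNReal.add_ne_top.2 ⟨ENNReal.sum_ne_top.2 fun n _ ↦ hz n, ?_⟩
  refine ne_top_of_le_ne_top ?_ (ENNReal.tsum_le_tsum htail)
  rw [ENNReal.tsum_geometric]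
  exact ENNReal.inv_ne_top.2 (tsub_pos_of_lt (EReal.exp_lt_one_iff.2 ha)).ne'

theorem expGrowthSup_mul_nonpos {y z : ℕ → ℝ≥0∞} (hy : expGrowthSup y ≤ 0)
    (hz : expGrowthSup z ≤ 0) : expGrowthSup (y * z) ≤ 0 :=
  (expGrowthSup_mul_le (.inr (ne_top_of_le_ne_top EReal.zero_ne_top hz))
    (.inl (ne_top_of_le_ne_top EReal.zero_ne_top hy))).trans (add_nonpos hy hz)

theorem expGrowthSup_add_one_nonpos {z : ℕ → ℝ≥0∞} (hz : expGrowthSup z ≤ 0) :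
    expGrowthSup (z + 1) ≤ 0 := by
  rw [expGrowthSup_add]
  exact sup_le hz (expGrowthSup_const one_ne_zero ENNReal.one_ne_top).le

theorem expGrowthSup_ofReal_nonpos {c : ℕ → ℝ} (hc : ∀ n, 0 ≤ c n)
    (h : Tendsto (fun n : ℕ ↦ c n ^ (n : ℝ)⁻¹) atTop (𝓝 1)) :
    expGrowthSup (fun n ↦ ENNReal.ofReal (c n)) ≤ 0 := by
  refine expGrowthSup_le_iff.2 fun b hb ↦ ?_
  have hlim : Tendsto (fun n : ℕ ↦ ENNReal.ofReal (c n ^ (n : ℝ)⁻¹)) atTop (𝓝 1) := by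
    simpa using ENNReal.tendsto_ofReal h
  filter_upwards [hlim.eventually_lt_const (EReal.one_lt_exp_iff.2 hb), eventually_ne_atTop 0]
    with n hn hn₀
  calc ENNReal.ofReal (c n) = ENNReal.ofReal (c n ^ (n : ℝ)⁻¹) ^ n := by
        rw [← ENNReal.ofReal_pow (Real.rpow_nonneg (hc n) _), Real.rpow_inv_natCast_pow (hc n) hn₀]
    _ ≤ b.exp ^ n := by gcongr
    _ = (b * n).exp := by rw [mul_comm, EReal.exp_nmul]

theorem expGrowthSup_natCast_add_nonpos {M : ℕ → ℕ}
    (hM : Tendsto (fun n : ℕ ↦ (M n : ℝ) / n) atTop (𝓝 0)) :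
    expGrowthSup (fun n ↦ ((n + M n : ℕ) : ℝ≥0∞)) ≤ 0 := by
  have hlinear : expGrowthSup (fun n : ℕ ↦ ENNReal.ofReal n) ≤ 0 :=
    expGrowthSup_ofReal_nonpos (fun n ↦ n.cast_nonneg)
      (by simpa [comp_def] using tendsto_rpow_div.comp tendsto_natCast_atTop_atTop)
  refine (expGrowthSup_le_of_eventually_le (b := 2) (by simp) ?_).trans hlinear
  filter_upwards [hM.eventually_lt_const one_pos, eventually_gt_atTop 0] with n hn hn₀
  have hMn : M n < n := by exact_mod_cast (div_lt_one (by exact_mod_cast hn₀)).1 hn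
  rw [ENNReal.ofReal_natCast]
  exact_mod_cast (show n + M n ≤ 2 * n by lia)

end Growth

section WeightedGroup

variable {α β G : Type*}

theorem tsum_mul_comp_eq_tsum_fiber (s : Set α) (π : α → G) (w : α → ℝ≥0∞) (H : G → ℝ≥0∞) :
    ∑' a : s, w a * H (π a) = ∑' g, (∑' a : ↥(s ∩ π ⁻¹' {g}), w a) * H g := by
  have hsingle (a : α) : s.indicator (fun a ↦ w a * H (π a)) a =
      ∑' g, (s ∩ π ⁻¹' {g}).indicator w a * H g := by
    rw [tsum_eq_single (π a) fun g hg ↦ by simp [hg.symm]]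
    by_cases ha : a ∈ s <;> simp [ha]
  calc ∑' a : s, w a * H (π a) = ∑' a, ∑' g, (s ∩ π ⁻¹' {g}).indicator w a * H g := by
        rw [tsum_subtype s fun a ↦ w a * H (π a)]
        exact tsum_congr hsingle
    _ = ∑' g, (∑' a : ↥(s ∩ π ⁻¹' {g}), w a) * H g := by
        rw [ENNReal.tsum_comm]
        simp only [ENNReal.tsum_mul_right, tsum_subtype]

theorem tsum_mul_comp_le {s : Set α} {t : Set β} {π : α → G} {ρ : β → G} {w : α → ℝ≥0∞}
    {v : β → ℝ≥0∞} {C : ℝ≥0∞}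
    (h : ∀ g, ∑' a : ↥(s ∩ π ⁻¹' {g}), w a ≤ C * ∑' b : ↥(t ∩ ρ ⁻¹' {g}), v b) (H : G → ℝ≥0∞) :
    ∑' a : s, w a * H (π a) ≤ C * ∑' b : t, v b * H (ρ b) := by
  rw [tsum_mul_comp_eq_tsum_fiber, tsum_mul_comp_eq_tsum_fiber, ← ENNReal.tsum_mul_left]
  refine ENNReal.tsum_le_tsum fun g ↦ ?_
  rw [← mul_assoc]
  gcongr
  exact h g

/-- The Green function of the weight `w` pushed forward along `π`: the total weight of the fibre
over `y`. -/
noncomputable def green (π : α → G) (w : α → ℝ≥0∞) (y : G) : ℝ≥0∞ := ∑' a : π ⁻¹' {y}, w a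

/-- The pressure of the weight `w`: the exponential growth rate in `n` of the total weight of the
elements of length `n`. -/
noncomputable def pressure (len : α → ℕ) (w : α → ℝ≥0∞) : EReal :=
  expGrowthSup fun n ↦ ∑' a : len ⁻¹' {n}, w a

theorem green_ne_zero {π : α → G} {w : α → ℝ≥0∞} (hπ : Surjective π) (hw : ∀ a, w a ≠ 0)
    (y : G) : green π w y ≠ 0 := by
  obtain ⟨a, rfl⟩ := hπ y
  exact fun h ↦ hw a (ENNReal.tsum_eq_zero.1 h ⟨a, rfl⟩)

variable [Group G]

/-- `glue` joins two elements, compatibly with `π`, at the cost of a factor `K` in the weight, and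
the two elements can be read off the result once the length of the first one is known. For words it
is concatenation with a connecting word in between. -/
structure IsGluing (len : α → ℕ) (π : α → G) (w : α → ℝ≥0∞) (K : ℝ≥0∞) (glue : α → α → α) :
    Prop where
  injOn : ∀ n, InjOn (uncurry glue) ((len ⁻¹' {n}) ×ˢ univ)
  map_glue : ∀ a b, π (glue a b) = π a * π b
  mul_le : ∀ a b, w a * w b ≤ K * w (glue a b)

/-- Asymptotic symmetry with subexponential errors: the weight of length `n` over `g` is at most
`c n` times the weight of length at most `R n` over `g⁻¹`, where neither `c` nor `R` grows
exponentially. -/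
def IsSubexpSymmetric (len : α → ℕ) (π : α → G) (w : α → ℝ≥0∞) : Prop :=
  ∃ (c : ℕ → ℝ≥0∞) (R : ℕ → ℕ), expGrowthSup c ≤ 0 ∧ expGrowthSup (fun n ↦ (R n : ℝ≥0∞)) ≤ 0 ∧
    ∀ᶠ n in atTop, ∀ g, ∑' a : ↥(len ⁻¹' {n} ∩ π ⁻¹' {g}), w a ≤
      c n * ∑' a : ↥(len ⁻¹' Iic (R n) ∩ π ⁻¹' {g⁻¹}), w a

variable {len : α → ℕ} {π : α → G} {w : α → ℝ≥0∞} {K : ℝ≥0∞} {glue : α → α → α}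

theorem IsGluing.tsum_mul_green_le (h : IsGluing len π w K glue) (n : ℕ) (y : G) :
    ∑' a : len ⁻¹' {n}, w a * green π w ((π a)⁻¹ * y) ≤ K * green π w y := by
  let join (p : Σ a : len ⁻¹' {n}, π ⁻¹' {(π a)⁻¹ * y}) : π ⁻¹' {y} :=
    ⟨glue p.1 p.2, by
      rw [mem_preimage, h.map_glue, show π p.2 = _ from p.2.2, mul_inv_cancel_left]; rfl⟩
  have hjoin : Injective join := by
    rintro ⟨a, b⟩ ⟨a', b'⟩ hab
    have := h.injOn n (mk_mem_prod a.2 (mem_univ b.1)) (mk_mem_prod a'.2 (mem_univ b'.1))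
      (congrArg Subtype.val hab)
    obtain ⟨haa, hbb⟩ := Prod.mk.inj this
    obtain rfl := Subtype.ext haa
    obtain rfl := Subtype.ext hbb
    rfl
  calc ∑' a : len ⁻¹' {n}, w a * green π w ((π a)⁻¹ * y)
      = ∑' p : Σ a : len ⁻¹' {n}, π ⁻¹' {(π a)⁻¹ * y}, w p.1 * w p.2 := by
        rw [ENNReal.tsum_sigma']
        exact tsum_congr fun a ↦ ENNReal.tsum_mul_left.symm
    _ ≤ ∑' p, K * w (join p) := ENNReal.tsum_le_tsum fun p ↦ h.mul_le p.1 p.2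
    _ = K * ∑' p, w (join p) := ENNReal.tsum_mul_left
    _ ≤ K * green π w y := by
        gcongr
        exact ENNReal.tsum_comp_le_tsum_of_injective hjoin fun a ↦ w a

theorem IsGluing.green_ne_top (h : IsGluing len π w K glue) (hK : K ≠ ∞) (hπ : Surjective π)
    (hw : ∀ a, w a ≠ 0) (hone : green π w 1 ≠ ∞) (y : G) : green π w y ≠ ∞ := by
  obtain ⟨a, ha⟩ := hπ y⁻¹
  have hle : w a * green π w y ≤ K * green π w 1 := by
    simpa [ha] using (ENNReal.le_tsum (⟨a, rfl⟩ : len ⁻¹' {len a})).trans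
      (h.tsum_mul_green_le (len a) 1)
  intro htop
  rw [htop, ENNReal.mul_top (hw a), top_le_iff] at hle
  exact ENNReal.mul_ne_top hK hone hle

theorem tsum_preimage_Iic_le {F : α → ℝ≥0∞} {B : ℝ≥0∞}
    (h : ∀ k, ∑' a : len ⁻¹' {k}, F a ≤ B) (R : ℕ) :
    ∑' a : len ⁻¹' Iic R, F a ≤ (R + 1) * B := by
  have hcover : len ⁻¹' Iic R = ⋃ k ∈ Finset.range (R + 1), len ⁻¹' {k} := by ext; simp
  calc ∑' a : len ⁻¹' Iic R, F a
      ≤ ∑ k ∈ Finset.range (R + 1), ∑' a : len ⁻¹' {k}, F a :=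
        (tsum_congr_set_coe F hcover).trans_le (ENNReal.tsum_biUnion_le F _ _)
    _ ≤ ∑ _k ∈ Finset.range (R + 1), B := Finset.sum_le_sum fun k _ ↦ h k
    _ = (R + 1) * B := by simp

theorem IsAmenable.tsum_preimage_singleton_le (hG : IsAmenable G) {H : G → ℝ≥0∞}
    (hH₀ : ∀ y, H y ≠ 0) (hH : ∀ y, H y ≠ ∞)
    (hK : ∀ k y, ∑' a : len ⁻¹' {k}, w a * H ((π a)⁻¹ * y) ≤ K * H y) {n R : ℕ} {C : ℝ≥0∞}
    (hsym : ∀ g, ∑' a : ↥(len ⁻¹' {n} ∩ π ⁻¹' {g}), w a ≤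
      C * ∑' a : ↥(len ⁻¹' Iic R ∩ π ⁻¹' {g⁻¹}), w a) :
    ∑' a : len ⁻¹' {n}, w a ≤ K * (C * (R + 1) + 1) := by
  have hsym' (g : G) : ∑' a : ↥(len ⁻¹' {n} ∩ π ⁻¹' {g}), w a ≤
      C * ∑' a : ↥(len ⁻¹' Iic R ∩ (fun a ↦ (π a)⁻¹) ⁻¹' {g}), w a := by
    refine (hsym g).trans_eq (congrArg _ (tsum_congr_set_coe w ?_))
    ext
    simp [inv_eq_iff_eq_inv]
  have hforward (y : G) : ∑' a : len ⁻¹' {n}, w a * H (π a * y) ≤ C * ((R + 1) * K) * H y :=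
    calc ∑' a : len ⁻¹' {n}, w a * H (π a * y)
        ≤ C * ∑' a : len ⁻¹' Iic R, w a * H ((π a)⁻¹ * y) :=
          tsum_mul_comp_le hsym' fun g ↦ H (g * y)
      _ ≤ C * ((R + 1) * (K * H y)) := by
          gcongr
          exact tsum_preimage_Iic_le (F := fun a ↦ w a * H ((π a)⁻¹ * y)) (fun k ↦ hK k y) R
      _ = C * ((R + 1) * K) * H y := by ring
  calc ∑' a : len ⁻¹' {n}, w a ≤ C * ((R + 1) * K) + K :=
        hG.tsum_le_add (fun a : len ⁻¹' {n} ↦ π a) (fun a ↦ w a) hH₀ hH hforward (hK n)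
    _ = K * (C * (R + 1) + 1) := by ring

theorem IsAmenable.pressure_nonpos (hG : IsAmenable G) (hπ : Surjective π) (hw : ∀ a, w a ≠ 0)
    (hglue : IsGluing len π w K glue) (hK : K ≠ ∞) (hsym : IsSubexpSymmetric len π w)
    (hone : green π w 1 ≠ ∞) : pressure len w ≤ 0 := by
  obtain ⟨c, R, hc, hR, hcR⟩ := hsym
  have hgrowth : expGrowthSup (c * ((fun n ↦ (R n : ℝ≥0∞)) + 1) + 1) ≤ 0 :=
    expGrowthSup_add_one_nonpos (expGrowthSup_mul_nonpos hc (expGrowthSup_add_one_nonpos hR))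
  refine (expGrowthSup_le_of_eventually_le hK ?_).trans hgrowth
  filter_upwards [hcR] with n hn
  exact hG.tsum_preimage_singleton_le (green_ne_zero hπ hw) (hglue.green_ne_top hK hπ hw hone)
    hglue.tsum_mul_green_le hn

theorem tsum_ne_top_of_pressure_nonpos {v : α → ℝ≥0∞} (hlen : ∀ n, (len ⁻¹' {n}).Finite)
    (hv : ∀ a, v a ≠ ∞) {r : ℝ≥0∞} (hr : r < 1) (hvw : ∀ a, v a ≤ w a * r ^ len a)
    (h : pressure len w ≤ 0) : ∑' a, v a ≠ ∞ := by
  have hsphere (n : ℕ) : ∑' a : len ⁻¹' {n}, v a ≤ (∑' a : len ⁻¹' {n}, w a) * r ^ n := by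
    rw [← ENNReal.tsum_mul_right]
    exact ENNReal.tsum_le_tsum fun a ↦ (hvw a).trans_eq (by rw [show len a = n from a.2])
  have hlog : r.log < 0 := ENNReal.log_lt_zero_iff.2 hr
  rw [← ENNReal.tsum_fiberwise v len]
  refine tsum_ne_top_of_expGrowthSup_neg (fun n ↦ ?_) ?_
  · have := (hlen n).fintype
    rw [tsum_fintype]
    exact ENNReal.sum_ne_top.2 fun a _ ↦ hv a
  · calc expGrowthSup (fun n ↦ ∑' a : len ⁻¹' {n}, v a)
        ≤ expGrowthSup ((fun n ↦ ∑' a : len ⁻¹' {n}, w a) * fun n ↦ r ^ n) :=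
          expGrowthSup_monotone hsphere
      _ ≤ pressure len w + expGrowthSup (fun n ↦ r ^ n) := expGrowthSup_mul_le
          (.inr (by rw [expGrowthSup_pow]; exact hlog.ne_top))
          (.inl (ne_top_of_le_ne_top EReal.zero_ne_top h))
      _ < 0 := by
          rw [expGrowthSup_pow]
          exact (add_le_of_nonpos_left h).trans_lt hlog

end WeightedGroup

section Words

variable {d : ℕ}

theorem linv_linv (x : Letter d) : linv (linv x) = x := by simp [linv]

theorem linv_ne (x : Letter d) : linv x ≠ x := by simp [linv, Prod.ext_iff]

theorem red_iff_isReduced (l : List (Letter d)) : Red l ↔ FreeGroup.IsReduced l := by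
  refine iff_of_eq (congrArg (fun R ↦ List.IsChain R l) ?_)
  ext ⟨i, b⟩ ⟨j, c⟩
  cases b <;> cases c <;> simp [linv, eq_comm]

theorem prodL_eq_mk (l : List (Letter d)) : prodL l = FreeGroup.mk l := by
  induction l with
  | nil => rfl
  | cons x l ih => simpa [prodL, toG, FreeGroup.mul_mk] using congrArg (toG x * ·) ih

theorem prodL_append (l l' : List (Letter d)) : prodL (l ++ l') = prodL l * prodL l' := by
  simp [prodL]

theorem prodL_toWord (x : FreeGroup (Fin d)) : prodL x.toWord = x := by
  rw [prodL_eq_mk, FreeGroup.mk_toWord]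

theorem red_toWord (x : FreeGroup (Fin d)) : Red x.toWord :=
  (red_iff_isReduced _).2 FreeGroup.isReduced_toWord

theorem Red.toWord_prodL {l : List (Letter d)} (h : Red l) : (prodL l).toWord = l := by
  rw [prodL_eq_mk, FreeGroup.toWord_mk, ((red_iff_isReduced l).1 h).reduce_eq]

theorem red_append {l l' : List (Letter d)} :
    Red (l ++ l') ↔ Red l ∧ Red l' ∧ ∀ x ∈ l.getLast?, ∀ y ∈ l'.head?, y ≠ linv x :=
  List.isChain_append

/-- The word `x w x⁻¹`. -/
def conjL (x : Letter d) (w : List (Letter d)) : List (Letter d) := [x] ++ w ++ [linv x]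

theorem head?_conjL (x : Letter d) (w : List (Letter d)) : (conjL x w).head? = some x := rfl

theorem getLast?_conjL (x : Letter d) (w : List (Letter d)) :
    (conjL x w).getLast? = some (linv x) :=
  List.getLast?_concat

theorem Red.conjL {w : List (Letter d)} (h : Red w) (hne : w ≠ []) {x : Letter d}
    (hhead : x ∉ w.head?.map linv) (hlast : x ∉ w.getLast?) : Red (conjL x w) := by
  have hsingle (y : Letter d) : Red [y] := List.isChain_singleton y
  have hx : Red ([x] ++ w) := by
    refine red_append.2 ⟨hsingle x, h, fun x' hx' y hy hyx ↦ hhead ?_⟩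
    obtain rfl : x = x' := by simpa using hx'
    exact Option.mem_map.2 ⟨y, hy, by rw [hyx, linv_linv]⟩
  refine red_append.2 ⟨hx, hsingle _, fun z hz y hy hyz ↦ hlast ?_⟩
  obtain rfl : linv x = y := by simpa using hy
  have hxz : x = z := by simpa only [linv_linv] using congrArg linv hyz
  have hz' : z ∈ w.getLast? := by
    rwa [List.getLast?_append_of_ne_nil _ hne] at hz
  rwa [hxz]

theorem prodL_conjL (x : Letter d) (w : List (Letter d)) :
    prodL (conjL x w) = toG x * prodL w * (toG x)⁻¹ := by
  simp [conjL, prodL, toG, FreeGroup.inv_mk, FreeGroup.invRev, linv, mul_assoc]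

theorem exists_letter_notMem (hd : 2 ≤ d) (o o' o'' : Option (Letter d)) :
    ∃ x : Letter d, x ∉ o ∧ x ∉ o' ∧ x ∉ o'' := by
  have hcard (o : Option (Letter d)) : o.toFinset.card ≤ 1 := by cases o <;> simp
  have hlt : (o.toFinset ∪ (o'.toFinset ∪ o''.toFinset)).card <
      (Finset.univ : Finset (Letter d)).card := by
    have := Finset.card_union_le o.toFinset (o'.toFinset ∪ o''.toFinset)
    have := Finset.card_union_le o'.toFinset o''.toFinset
    have := hcard o
    have := hcard o'
    have := hcard o''
    simp only [Finset.card_univ, Fintype.card_prod, Fintype.card_fin, Fintype.card_bool]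
    lia
  obtain ⟨x, -, hx⟩ := Finset.exists_mem_notMem_of_card_lt_card hlt
  exact ⟨x, by simpa using hx⟩

theorem exists_connecting_word (hd : 2 ≤ d) (N : Subgroup (FreeGroup (Fin d))) [N.Normal]
    (hN : N ≠ ⊥) : ∃ L : ℕ, ∀ a b : List (Letter d), Red a → Red b →
      ∃ v : List (Letter d), v.length = L ∧ prodL v ∈ N ∧ Red (a ++ v ++ b) := by
  obtain ⟨t, htN, ht⟩ := N.bot_or_exists_ne_one.resolve_left hN
  have hne : t.toWord ≠ [] := mt FreeGroup.toWord_eq_nil_iff.1 ht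
  obtain ⟨q, hqhead, hqlast, -⟩ :=
    exists_letter_notMem hd (t.toWord.head?.map linv) t.toWord.getLast? none
  have hq : Red (conjL q t.toWord) := (red_toWord t).conjL hne hqhead hqlast
  have hmem : prodL (conjL q t.toWord) ∈ N := by
    rw [prodL_conjL, prodL_toWord]
    exact Subgroup.Normal.conj_mem ‹_› t htN _
  refine ⟨(conjL q t.toWord).length + 2, fun a b ha hb ↦ ?_⟩
  obtain ⟨p, hpa, hpb, hpq⟩ :=
    exists_letter_notMem hd (a.getLast?.map linv) b.head? (some (linv q))
  have hp : Red (conjL p (conjL q t.toWord)) := by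
    refine hq.conjL (by simp [conjL]) ?_ ?_
    · simpa [head?_conjL, eq_comm] using hpq
    · simpa [getLast?_conjL, eq_comm] using hpq
  refine ⟨conjL p (conjL q t.toWord), by simp +arith [conjL], ?_, ?_⟩
  · rw [prodL_conjL]
    exact Subgroup.Normal.conj_mem ‹_› _ hmem _
  · refine red_append.2 ⟨red_append.2 ⟨ha, hp, fun x hx y hy hyx ↦ hpa ?_⟩, hb,
      fun x hx y hy hyx ↦ hpb ?_⟩
    · obtain rfl : p = y := by simpa [head?_conjL] using hy
      exact Option.mem_map.2 ⟨x, hx, hyx.symm⟩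
    · obtain rfl : linv p = x := by simpa [getLast?_conjL] using hx
      rwa [hyx, linv_linv] at hy

end Words

section Potential

variable {d : ℕ}

theorem Adm.shift {τ : ℕ → Letter d} (hτ : Adm τ) (n : ℕ) : Adm fun k ↦ τ (k + n) := fun k ↦ by
  simpa only [add_right_comm] using hτ (k + n)

theorem Red.cyl_nonempty [NeZero d] {l : List (Letter d)} (hl : Red l) : (Cyl l).Nonempty := by
  rcases eq_or_ne l [] with rfl | hne
  · exact ⟨fun _ ↦ (0, true), fun _ ↦ (linv_ne _).symm, by simp⟩
  have hpos : 0 < l.length := List.length_pos_iff.2 hne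
  refine ⟨fun i ↦ l[min i (l.length - 1)], fun i ↦ ?_, fun i hi ↦ ?_⟩
  · by_cases hi : i + 1 < l.length
    · simpa only [min_eq_left (show i + 1 ≤ l.length - 1 by lia),
        min_eq_left (show i ≤ l.length - 1 by lia)] using List.isChain_iff_getElem.1 hl i hi
    · simpa only [min_eq_right (show l.length - 1 ≤ i + 1 by lia),
        min_eq_right (show l.length - 1 ≤ i by lia)] using (linv_ne _).symm
  · simp only [min_eq_left (show i ≤ l.length - 1 by lia), List.get_eq_getElem]

theorem mem_cyl_of_mem_cyl_append {l l' : List (Letter d)} {τ : ℕ → Letter d}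
    (hτ : τ ∈ Cyl (l ++ l')) : τ ∈ Cyl l ∧ (fun k ↦ τ (k + l.length)) ∈ Cyl l' := by
  refine ⟨⟨hτ.1, fun i hi ↦ ?_⟩, hτ.1.shift _, fun i hi ↦ ?_⟩
  · simpa [List.getElem_append_left hi] using hτ.2 i (by rw [List.length_append]; lia)
  · simpa using hτ.2 (i + l.length) (by rw [List.length_append]; lia)

theorem birk_add (f : (ℕ → Letter d) → ℝ) (m n : ℕ) (τ : ℕ → Letter d) :
    birk f (m + n) τ = birk f m τ + birk f n fun k ↦ τ (k + m) := by
  simp only [birk, Finset.sum_range_add, ← add_assoc, add_right_comm _ _ m]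

theorem birk_le {f : (ℕ → Letter d) → ℝ} {b : ℝ} (hb : ∀ τ, Adm τ → f τ ≤ b) (n : ℕ)
    {τ : ℕ → Letter d} (hτ : Adm τ) : birk f n τ ≤ n * b := by
  simpa [birk] using Finset.sum_le_card_nsmul (Finset.range n) _ b fun i _ ↦ hb _ (hτ.shift i)

theorem Red.Sw_le [NeZero d] {f : (ℕ → Letter d) → ℝ} {b : ℝ} (hb : ∀ τ, Adm τ → f τ ≤ b)
    {l : List (Letter d)} (hl : Red l) : Sw f l ≤ l.length * b := by
  obtain ⟨τ, hτ⟩ := hl.cyl_nonempty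
  refine csSup_le ⟨_, τ, hτ, rfl⟩ ?_
  rintro _ ⟨τ', hτ', rfl⟩
  exact birk_le hb _ hτ'.1

theorem Sx_le [NeZero d] {f : (ℕ → Letter d) → ℝ} {b : ℝ} (hb : ∀ τ, Adm τ → f τ ≤ b)
    (x : FreeGroup (Fin d)) : Sx f x ≤ x.norm * b :=
  (red_toWord x).Sw_le hb

/-- Bounded distortion: the Birkhoff sums of `f` along a word vary by at most `D` over the cylinder
of the word, with `D` independent of the length of the word. -/
def BoundedDistortion (f : (ℕ → Letter d) → ℝ) (D : ℝ) : Prop :=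
  ∀ l, ∀ τ ∈ Cyl l, ∀ τ' ∈ Cyl l, birk f l.length τ ≤ birk f l.length τ' + D

theorem Holder.exists_boundedDistortion {f : (ℕ → Letter d) → ℝ} (hf : Holder f) :
    ∃ D, BoundedDistortion f D := by
  obtain ⟨α, hα, V, hV⟩ := hf
  refine ⟨|V| * (1 - Real.exp (-α))⁻¹, fun l τ hτ τ' hτ' ↦ ?_⟩
  have hterm : ∀ i ∈ Finset.range l.length, (f fun k ↦ τ (k + i)) - f (fun k ↦ τ' (k + i)) ≤
      |V| * Real.exp (-α) ^ (l.length - i) := fun i hi ↦ by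
    have hil : i < l.length := Finset.mem_range.1 hi
    calc (f fun k ↦ τ (k + i)) - f (fun k ↦ τ' (k + i))
        ≤ V * Real.exp (-α * (l.length - i : ℕ)) := (le_abs_self _).trans <|
          hV _ (by lia) _ _ (hτ.1.shift i) (hτ'.1.shift i) fun k hk ↦ by
            rw [hτ.2 (k + i) (by lia), hτ'.2 (k + i) (by lia)]
      _ ≤ |V| * Real.exp (-α) ^ (l.length - i) := by
          rw [mul_comm (-α), Real.exp_nat_mul]
          gcongr
          exact le_abs_self V
  rw [← sub_le_iff_le_add']
  calc birk f l.length τ - birk f l.length τ'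
      ≤ ∑ i ∈ Finset.range l.length, |V| * Real.exp (-α) ^ (l.length - i) := by
        rw [birk, birk, ← Finset.sum_sub_distrib]
        exact Finset.sum_le_sum hterm
    _ ≤ |V| * (1 - Real.exp (-α))⁻¹ := by
        rw [← Finset.mul_sum]
        gcongr
        exact sum_range_pow_sub_le (Real.exp_pos _).le (by simpa using hα) _

namespace BoundedDistortion

variable {f : (ℕ → Letter d) → ℝ} {D : ℝ}

theorem birk_le_Sw (hf : BoundedDistortion f D) {l : List (Letter d)} {τ : ℕ → Letter d}
    (hτ : τ ∈ Cyl l) : birk f l.length τ ≤ Sw f l := by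
  refine le_csSup ⟨birk f l.length τ + D, ?_⟩ ⟨τ, hτ, rfl⟩
  rintro _ ⟨τ', hτ', rfl⟩
  exact hf l τ' hτ' τ hτ

theorem Sw_le_birk_add (hf : BoundedDistortion f D) {l : List (Letter d)} {τ : ℕ → Letter d}
    (hτ : τ ∈ Cyl l) : Sw f l ≤ birk f l.length τ + D := by
  refine csSup_le ⟨_, τ, hτ, rfl⟩ ?_
  rintro _ ⟨τ', hτ', rfl⟩
  exact hf l τ' hτ' τ hτ

theorem Sw_add_Sw_le [NeZero d] (hf : BoundedDistortion f D) {l l' : List (Letter d)}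
    (hl : Red (l ++ l')) : Sw f l + Sw f l' ≤ Sw f (l ++ l') + 2 * D := by
  obtain ⟨τ, hτ⟩ := hl.cyl_nonempty
  obtain ⟨hleft, hright⟩ := mem_cyl_of_mem_cyl_append hτ
  calc Sw f l + Sw f l'
      ≤ (birk f l.length τ + D) + (birk f l'.length (fun k ↦ τ (k + l.length)) + D) :=
        add_le_add (hf.Sw_le_birk_add hleft) (hf.Sw_le_birk_add hright)
    _ = birk f (l ++ l').length τ + 2 * D := by rw [List.length_append, birk_add]; ring
    _ ≤ Sw f (l ++ l') + 2 * D := by gcongr; exact hf.birk_le_Sw hτ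

end BoundedDistortion

end Potential

section Weight

variable {d : ℕ}

theorem finite_preimage_norm_singleton (n : ℕ) :
    (FreeGroup.norm ⁻¹' {n} : Set (FreeGroup (Fin d))).Finite :=
  Finite.preimage (f := FreeGroup.toWord) FreeGroup.toWord_injective.injOn
    (List.finite_length_eq (Letter d) n)

/-- The weight `e^{u S_x ζ}` of `x`, with values in `ℝ≥0∞` so that divergent series have sum `∞`. -/
noncomputable def weight (ζ : (ℕ → Letter d) → ℝ) (u : ℝ) (x : FreeGroup (Fin d)) : ℝ≥0∞ :=
  ENNReal.ofReal (Real.exp (u * Sx ζ x))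

variable {ζ : (ℕ → Letter d) → ℝ} {u : ℝ}

theorem weight_ne_zero (x : FreeGroup (Fin d)) : weight ζ u x ≠ 0 :=
  (ENNReal.ofReal_pos.2 (Real.exp_pos _)).ne'

theorem tsum_weight_ne_top_iff {ι : Type*} (f : ι → FreeGroup (Fin d)) :
    ∑' i, weight ζ u (f i) ≠ ∞ ↔ Summable fun i ↦ Real.exp (u * Sx ζ (f i)) := by
  refine ⟨fun h ↦ ?_, Summable.tsum_ofReal_ne_top⟩
  simpa only [weight, ENNReal.toReal_ofReal (Real.exp_pos _).le] using ENNReal.summable_toReal h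

theorem weight_mul_weight_le (hu : 0 ≤ u) {x y z : FreeGroup (Fin d)} {C : ℝ}
    (h : Sx ζ x + Sx ζ y ≤ Sx ζ z + C) :
    weight ζ u x * weight ζ u y ≤ ENNReal.ofReal (Real.exp (u * C)) * weight ζ u z := by
  simp only [weight, ← ENNReal.ofReal_mul (Real.exp_pos _).le, ← Real.exp_add]
  refine ENNReal.ofReal_le_ofReal (Real.exp_le_exp.2 ?_)
  linarith [mul_le_mul_of_nonneg_left h hu]

theorem weight_le_weight_mul_pow [NeZero d] {b u' : ℝ} (hb : ∀ τ, Adm τ → ζ τ ≤ b) (hu : u ≤ u')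
    (x : FreeGroup (Fin d)) :
    weight ζ u' x ≤ weight ζ u x * ENNReal.ofReal (Real.exp ((u' - u) * b)) ^ x.norm := by
  rw [weight, weight, ← ENNReal.ofReal_pow (Real.exp_pos _).le, ← Real.exp_nat_mul,
    ← ENNReal.ofReal_mul (Real.exp_pos _).le, ← Real.exp_add]
  refine ENNReal.ofReal_le_ofReal (Real.exp_le_exp.2 ?_)
  linarith [mul_le_mul_of_nonneg_left (Sx_le hb x) (sub_nonneg.2 hu)]

theorem green_mk_one (N : Subgroup (FreeGroup (Fin d))) [N.Normal] (w : FreeGroup (Fin d) → ℝ≥0∞) :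
    green (QuotientGroup.mk (s := N)) w 1 = ∑' x : N, w x :=
  tsum_congr_set_coe w (t := N) (by ext x; exact QuotientGroup.eq_one_iff x)

theorem exists_connecting_element (hd : 2 ≤ d) (N : Subgroup (FreeGroup (Fin d))) [N.Normal]
    (hN : N ≠ ⊥) : ∃ L : ℕ, ∀ x y : FreeGroup (Fin d), ∃ v ∈ N, v.norm = L ∧
      (x * v * y).toWord = x.toWord ++ v.toWord ++ y.toWord := by
  obtain ⟨L, hL⟩ := exists_connecting_word hd N hN
  refine ⟨L, fun x y ↦ ?_⟩
  obtain ⟨v, hvL, hvN, hred⟩ := hL _ _ (red_toWord x) (red_toWord y)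
  have hv : (prodL v).toWord = v := (red_append.1 (red_append.1 hred).1).2.1.toWord_prodL
  refine ⟨prodL v, hvN, by rw [FreeGroup.norm, hv, hvL], ?_⟩
  rw [hv, ← hred.toWord_prodL, prodL_append, prodL_append, prodL_toWord, prodL_toWord]

theorem BoundedDistortion.Sx_add_add_le [NeZero d] {D : ℝ} (hζ : BoundedDistortion ζ D)
    {x v y : FreeGroup (Fin d)} (h : (x * v * y).toWord = x.toWord ++ v.toWord ++ y.toWord) :
    Sx ζ x + Sx ζ v + Sx ζ y ≤ Sx ζ (x * v * y) + 4 * D := by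
  have hred : Red (x.toWord ++ v.toWord ++ y.toWord) := h ▸ red_toWord _
  have hxv := hζ.Sw_add_Sw_le (red_append.1 hred).1
  have hxvy := hζ.Sw_add_Sw_le hred
  rw [← h] at hxvy
  simp only [Sx]
  linarith

theorem exists_isGluing (hd : 2 ≤ d) (N : Subgroup (FreeGroup (Fin d))) [N.Normal] (hN : N ≠ ⊥)
    {D : ℝ} (hζ : BoundedDistortion ζ D) (hu : 0 ≤ u) :
    ∃ K ≠ ∞, ∃ glue, IsGluing FreeGroup.norm (QuotientGroup.mk (s := N)) (weight ζ u) K glue := by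
  have : NeZero d := ⟨by lia⟩
  obtain ⟨L, hL⟩ := exists_connecting_element hd N hN
  choose v hvN hvL hword using hL
  obtain ⟨C, hC⟩ := ((finite_preimage_norm_singleton L).image (Sx ζ)).bddBelow
  refine ⟨ENNReal.ofReal (Real.exp (u * (4 * D - C))), ENNReal.ofReal_ne_top,
    fun x y ↦ x * v x y * y, ?_, fun x y ↦ ?_, fun x y ↦ ?_⟩
  · rintro n ⟨x, y⟩ ⟨hx, -⟩ ⟨x', y'⟩ ⟨hx', -⟩ heq
    have hwords : x.toWord ++ ((v x y).toWord ++ y.toWord) =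
        x'.toWord ++ ((v x' y').toWord ++ y'.toWord) := by
      simpa only [uncurry_apply_pair, hword, List.append_assoc] using congrArg FreeGroup.toWord heq
    obtain ⟨hxx, hvy⟩ := List.append_inj hwords (hx.trans hx'.symm)
    obtain ⟨-, hyy⟩ := List.append_inj hvy ((hvL x y).trans (hvL x' y').symm)
    exact Prod.ext (FreeGroup.toWord_injective hxx) (FreeGroup.toWord_injective hyy)
  · rw [QuotientGroup.mk_mul, QuotientGroup.mk_mul, (QuotientGroup.eq_one_iff _).2 (hvN x y),
      mul_one]
  · have hCv : C ≤ Sx ζ (v x y) := hC (mem_image_of_mem _ (hvL x y))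
    exact weight_mul_weight_le hu (by linarith [hζ.Sx_add_add_le (hword x y)])

theorem ofReal_tsum_exp_Sw {P : List (Letter d) → Prop} {s : Set (FreeGroup (Fin d))}
    (hs : s.Finite) (hP : ∀ l, P l ↔ Red l ∧ prodL l ∈ s) :
    ENNReal.ofReal (∑' l : {l // P l}, Real.exp (u * Sw ζ l.val)) = ∑' x : s, weight ζ u x := by
  let e : {l // P l} ≃ s :=
    { toFun l := ⟨prodL l.1, ((hP l).1 l.2).2⟩
      invFun x := ⟨x.1.toWord, (hP _).2 ⟨red_toWord _, by rw [prodL_toWord]; exact x.2⟩⟩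
      left_inv l := Subtype.ext ((hP l).1 l.2).1.toWord_prodL
      right_inv x := Subtype.ext (prodL_toWord x.1) }
  have := hs.to_subtype
  rw [← e.symm.tsum_eq, ENNReal.ofReal_tsum_of_nonneg (fun _ ↦ (Real.exp_pos _).le) .of_finite]
  rfl

theorem Red.prodL_mem_iff {N : Subgroup (FreeGroup (Fin d))} [N.Normal] {l : List (Letter d)}
    (hl : Red l) {t : Set ℕ} {g : FreeGroup (Fin d)} :
    prodL l ∈ FreeGroup.norm ⁻¹' t ∩ QuotientGroup.mk ⁻¹' {(g : FreeGroup (Fin d) ⧸ N)} ↔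
      l.length ∈ t ∧ prodL l * g⁻¹ ∈ N := by
  refine and_congr (by rw [mem_preimage, FreeGroup.norm, hl.toWord_prodL]) ?_
  rw [mem_preimage, mem_singleton_iff, ← QuotientGroup.eq_one_iff, QuotientGroup.mk_mul,
    QuotientGroup.mk_inv, mul_inv_eq_one]

theorem AsympSymm.isSubexpSymmetric {N : Subgroup (FreeGroup (Fin d))} [N.Normal]
    (h : AsympSymm N ζ) (u : ℝ) :
    IsSubexpSymmetric FreeGroup.norm (QuotientGroup.mk (s := N)) (weight ζ u) := by
  obtain ⟨n₀, c, M, hc, hc₁, hM, hle⟩ := h u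
  refine ⟨fun n ↦ ENNReal.ofReal (c n), fun n ↦ n + M n,
    expGrowthSup_ofReal_nonpos (fun n ↦ (hc n).le) hc₁, expGrowthSup_natCast_add_nonpos hM, ?_⟩
  filter_upwards [eventually_ge_atTop n₀] with n hn
  rintro ⟨g⟩
  have hball (R : ℕ) : (FreeGroup.norm ⁻¹' Iic R : Set (FreeGroup (Fin d))).Finite :=
    (finite_Iic R).preimage' fun n _ ↦ finite_preimage_norm_singleton n
  calc ∑' x : ↥(FreeGroup.norm ⁻¹' {n} ∩ QuotientGroup.mk ⁻¹' {(g : FreeGroup (Fin d) ⧸ N)}),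
        weight ζ u x
      = ENNReal.ofReal (∑' l : {l : List (Letter d) //
          l.length = n ∧ Red l ∧ prodL l * g⁻¹ ∈ N}, Real.exp (u * Sw ζ l.val)) := by
        refine (ofReal_tsum_exp_Sw ((finite_preimage_norm_singleton n).inter_of_left _)
          fun l ↦ ?_).symm
        rw [and_left_comm]
        exact and_congr_right fun hl ↦ by rw [hl.prodL_mem_iff, mem_singleton_iff]
    _ ≤ ENNReal.ofReal (c n * ∑' l : {l : List (Letter d) // Red l ∧ prodL l * g ∈ N ∧
          n - M n ≤ l.length ∧ l.length ≤ n + M n}, Real.exp (u * Sw ζ l.val)) :=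
        ENNReal.ofReal_le_ofReal (hle g n hn)
    _ = ENNReal.ofReal (c n) * ∑' x : ↥(FreeGroup.norm ⁻¹' Icc (n - M n) (n + M n) ∩
          QuotientGroup.mk ⁻¹' {(g : FreeGroup (Fin d) ⧸ N)⁻¹}), weight ζ u x := by
        rw [ENNReal.ofReal_mul (hc n).le, ofReal_tsum_exp_Sw
          (((hball (n + M n)).subset (preimage_mono Icc_subset_Iic_self)).inter_of_left _)]
        refine fun l ↦ and_congr_right fun hl ↦ ?_
        rw [← QuotientGroup.mk_inv, hl.prodL_mem_iff, inv_inv, mem_Icc, and_comm]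
    _ ≤ ENNReal.ofReal (c n) * ∑' x : ↥(FreeGroup.norm ⁻¹' Iic (n + M n) ∩
          QuotientGroup.mk ⁻¹' {(g : FreeGroup (Fin d) ⧸ N)⁻¹}), weight ζ u x := by
        gcongr
        exact ENNReal.tsum_mono_subtype _ (by gcongr; exact Icc_subset_Iic_self)

theorem nonneg_of_summable [NeZero d] {b : ℝ} (hb : b ≤ 0) (hζb : ∀ τ, Adm τ → ζ τ ≤ b)
    {N : Subgroup (FreeGroup (Fin d))} (hN : N ≠ ⊥)
    (hsum : Summable fun x : N ↦ Real.exp (u * Sx ζ x)) : 0 ≤ u := by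
  by_contra! hu
  have := N.nontrivial_iff_ne_bot.2 hN
  obtain ⟨t, ht⟩ := exists_ne (1 : N)
  have : Infinite N := .of_injective (fun n : ℕ ↦ t ^ n)
    (injective_pow_iff_not_isOfFinOrder.2 (not_isOfFinOrder_of_isMulTorsionFree ht))
  have hone : Summable fun _ : N ↦ (1 : ℝ) := by
    refine hsum.of_nonneg_of_le (fun _ ↦ zero_le_one) fun x ↦ Real.one_le_exp ?_
    exact mul_nonneg_of_nonpos_of_nonpos hu.le
      ((Sx_le hζb x).trans (mul_nonpos_of_nonneg_of_nonpos (Nat.cast_nonneg _) hb))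
  exact one_ne_zero ((summable_const_iff _).1 hone)

end Weight

section Exponents

variable {d : ℕ} {ζ : (ℕ → Letter d) → ℝ}

theorem summable_of_summable_subgroup (hd : 2 ≤ d) {D : ℝ} (hζ : BoundedDistortion ζ D) {b : ℝ}
    (hb : b < 0) (hζb : ∀ τ, Adm τ → ζ τ ≤ b) {N : Subgroup (FreeGroup (Fin d))} [N.Normal]
    (hN : N ≠ ⊥) (hamen : IsAmenable (FreeGroup (Fin d) ⧸ N)) {u u' : ℝ} (hu : 0 ≤ u)
    (hsym : IsSubexpSymmetric FreeGroup.norm (QuotientGroup.mk (s := N)) (weight ζ u))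
    (huu' : u < u') (hsum : Summable fun x : N ↦ Real.exp (u * Sx ζ x)) :
    Summable fun x ↦ Real.exp (u' * Sx ζ x) := by
  have : NeZero d := ⟨by lia⟩
  obtain ⟨K, hK, glue, hglue⟩ := exists_isGluing hd N hN hζ hu
  have hgreen : green (QuotientGroup.mk (s := N)) (weight ζ u) 1 ≠ ∞ := by
    rw [green_mk_one]
    exact (tsum_weight_ne_top_iff _).2 hsum
  have hpressure : pressure FreeGroup.norm (weight ζ u) ≤ 0 :=
    hamen.pressure_nonpos QuotientGroup.mk_surjective weight_ne_zero hglue hK hsym hgreen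
  have hr : ENNReal.ofReal (Real.exp ((u' - u) * b)) < 1 := by
    simpa using mul_neg_of_pos_of_neg (sub_pos.2 huu') hb
  exact (tsum_weight_ne_top_iff id).1 <| tsum_ne_top_of_pressure_nonpos
    finite_preimage_norm_singleton (fun _ ↦ ENNReal.ofReal_ne_top) hr
    (weight_le_weight_mul_pow hζb huu'.le) hpressure

end Exponents

theorem stmt18_general {d : ℕ} (hd : 2 ≤ d) {ζ : (ℕ → Letter d) → ℝ} {D : ℝ}
    (hζ : BoundedDistortion ζ D) {b : ℝ} (hb : b < 0) (hζb : ∀ τ, Adm τ → ζ τ ≤ b)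
    {N : Subgroup (FreeGroup (Fin d))} [N.Normal] (hN : N ≠ ⊥)
    (hamen : IsAmenable (FreeGroup (Fin d) ⧸ N))
    (hsym : ∀ u, 0 ≤ u →
      IsSubexpSymmetric FreeGroup.norm (QuotientGroup.mk (s := N)) (weight ζ u)) :
    sInf {u : ℝ | Summable fun x : N ↦ Real.exp (u * Sx ζ (x : FreeGroup (Fin d)))} =
      sInf {u : ℝ | Summable fun x : FreeGroup (Fin d) ↦ Real.exp (u * Sx ζ x)} := by
  have : NeZero d := ⟨by lia⟩
  have hnonneg {u : ℝ} (hu : Summable fun x : N ↦ Real.exp (u * Sx ζ x)) : 0 ≤ u :=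
    nonneg_of_summable hb.le hζb hN hu
  have hsub {u : ℝ} (hu : Summable fun x ↦ Real.exp (u * Sx ζ x)) :
      Summable fun x : N ↦ Real.exp (u * Sx ζ x) :=
    hu.comp_injective Subtype.val_injective
  refine csInf_eq_csInf_of_forall_Ioi_subset ⟨0, fun _ hu ↦ hnonneg hu⟩
    (fun _ hu ↦ hsub hu) fun u hu u' huu' ↦ ?_
  exact summable_of_summable_subgroup hd hζ hb hζb hN hamen (hnonneg hu) (hsym u (hnonneg hu))
    huu' hu

/- STATEMENT 18: If F_d/N is amenable and (N, Φ) is asymptotically symmetric, then the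
exponents of convergence coincide: δ_N = δ. -/
theorem stmt18 (d : ℕ) (hd : 2 ≤ d)
    (ζ : (ℕ → Letter d) → ℝ) (hζ : GeomPot ζ)
    (N : Subgroup (FreeGroup (Fin d))) [N.Normal] (hN : N ≠ ⊥)
    (hamen : IsAmenable (FreeGroup (Fin d) ⧸ N))
    (hsym : AsympSymm N ζ) :
    sInf {u : ℝ | Summable fun x : N => Real.exp (u * Sx ζ (x : FreeGroup (Fin d)))} =
      sInf {u : ℝ | Summable fun x : FreeGroup (Fin d) => Real.exp (u * Sx ζ x)} := by
  obtain ⟨⟨D, hD⟩, s, hs₀, hs₁, hs⟩ := hζ.imp_left Holder.exists_boundedDistortion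
  exact stmt18_general hd hD (Real.log_neg hs₀ hs₁) (fun τ _ ↦ hs τ) hN hamen
    fun u _ ↦ hsym.isSubexpSymmetric u

end Stmt18
end
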